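/- The filter transition kernel Π admits a unique Π-invariant probability measure on P(E) if and only if the filter is stable, i.e. for all μ, ν ∈ P(E) with μ ≪ ν one has ‖π_n^μ(y) − π_n^ν(y)‖ → 0 as n → ∞ for Q_μ-almost every y ∈ F^ℕ. (Since μ ≪ ν implies Q_μ ≪ Q_ν, the filter π_n^ν is well-defined Q_μ-almost surely.) -/

import Mathlib

open MeasureTheory Filter Topology ENNReal

/-- `P(E)`: probability vectors on a countable set `E`, with the topology of
pointwise (equivalently, weak) convergence inherited from `E → ℝ`. -/
abbrev ProbVec (E : Type*) := {p : E → ℝ // (∀ i, 0 ≤ p i) ∧ HasSum p 1}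

/-- Row-vector/matrix product `(p M(y))_j = ∑_i p_i M_{ij}(y)`. -/
noncomputable def rowMul {E F : Type*} (M : F → E → E → ℝ) (p : E → ℝ) (y : F) : E → ℝ :=
  fun j => ∑' i, p i * M y i j

/-- Iterated product `p M(y₁)⋯M(yₙ)` along a list of observations. -/
noncomputable def rowIter {E F : Type*} (M : F → E → E → ℝ) (p : E → ℝ) (ys : List F) : E → ℝ :=
  ys.foldl (rowMul M) p

/-- `p 1 = ∑_j p_j`. -/
noncomputable def rowTot {E : Type*} (p : E → ℝ) : ℝ := ∑' j, p j

/-- One step of the filter: `μ ↦ μM(y)/(μM(y)1)` (junk value `μ` when undefined). -/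
noncomputable def filterStep {E F : Type*} (M : F → E → E → ℝ) (μ : ProbVec E) (y : F) :
    ProbVec E := by
  classical
  exact if h : ∃ ν : ProbVec E, ∀ j,
      (ν : E → ℝ) j * rowTot (rowMul M (μ : E → ℝ) y) = rowMul M (μ : E → ℝ) y j
    then h.choose else μ

/-- The filter `μM(y₁)⋯M(yₙ)/(μM(y₁)⋯M(yₙ)1)` (junk value `μ` when undefined). -/
noncomputable def filterList {E F : Type*} (M : F → E → E → ℝ) (μ : ProbVec E) (ys : List F) :
    ProbVec E := by
  classical
  exact if h : ∃ ν : ProbVec E, ∀ j,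
      (ν : E → ℝ) j * rowTot (rowIter M (μ : E → ℝ) ys) = rowIter M (μ : E → ℝ) ys j
    then h.choose else μ

/-- The filter `π_n^μ(y)` as a function of the observation path `y : ℕ → F`
(the coordinate `y k` represents the observation `y_{k+1}`). -/
noncomputable def filterSeq {E F : Type*} (M : F → E → E → ℝ) (μ : ProbVec E) (y : ℕ → F)
    (n : ℕ) : ProbVec E :=
  filterList M μ (List.ofFn fun k : Fin n => y k)

/-- The filter transition kernel `Π`, acting on functions:
`Πf(μ) = ∫ f(μM(y)/(μM(y)1)) ⬝ (μM(y)1) φ(dy)`. -/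
noncomputable def filterKernel {E F : Type*} [MeasurableSpace F] (M : F → E → E → ℝ)
    (φ : Measure F) (f : ProbVec E → ℝ) (μ : ProbVec E) : ℝ :=
  ∫ y, f (filterStep M μ y) * rowTot (rowMul M (μ : E → ℝ) y) ∂φ

/-- Bounded continuous real functions on `P(E)`. -/
def IsBddCont {E : Type*} (f : ProbVec E → ℝ) : Prop :=
  Continuous f ∧ ∃ C : ℝ, ∀ μ, |f μ| ≤ C

/-- A probability measure `𝕄` on `P(E)` is `Π`-invariant if `∫ Πf d𝕄 = ∫ f d𝕄`
for every bounded continuous `f`. -/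
def IsPiInvariant {E F : Type*} [MeasurableSpace F] (M : F → E → E → ℝ) (φ : Measure F)
    (𝕄 : ProbabilityMeasure (ProbVec E)) : Prop :=
  ∀ f : ProbVec E → ℝ, IsBddCont f →
    ∫ μ, filterKernel M φ f μ ∂(𝕄 : Measure (ProbVec E)) =
      ∫ μ, f μ ∂(𝕄 : Measure (ProbVec E))

/-- The signal transition matrix `P_{ij} = ∫ M_{ij}(y) φ(dy)`. -/
noncomputable def transMat {E F : Type*} [MeasurableSpace F] (M : F → E → E → ℝ)
    (φ : Measure F) : E → E → ℝ :=
  fun i j => ∫ y, M y i j ∂φ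

/-- Powers of a transition matrix on a countable state space. -/
noncomputable def matPow {E : Type*} [DecidableEq E] (P : E → E → ℝ) : ℕ → E → E → ℝ
  | 0 => fun i j => if i = j then 1 else 0
  | n + 1 => fun i j => ∑' k, matPow P n i k * P k j

/-- Total variation (ℓ¹) distance on `P(E)`. -/
noncomputable def tvDist {E : Type*} (p q : ProbVec E) : ℝ :=
  ∑' i, |(p : E → ℝ) i - (q : E → ℝ) i|

/-!
Since every state has positive `λ`-mass, `μ ≪ λ` for all `μ`, so the filter can always be compared
with the stationary one, `π_n^λ`.

If the filter is stable and `𝕄` is invariant, then `𝕄` has barycentre `λ`, and `∫ f d𝕄` is the mean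
over `μ ~ 𝕄` of `E_μ f(π_n^μ)`. By stability `π_n^μ` may be replaced by `π_n^λ`, and the mixture of
the `Q_μ` over `𝕄` is `Q_λ`; hence `∫ f d𝕄 = lim E_λ f(π_n^λ)`, which determines `𝕄`.

Conversely, let `𝕄` be the only invariant measure. The Cesàro means of the laws of `π_n^k`, started
from the unit mass at a state `k`, and of `π_n^λ` are tight because `δ_k ≤ C λ`, and their cluster
points are invariant, so both converge to `𝕄`. When `k` is drawn from `λ`, `π_n^λ` is the
conditional mean of `π_n^k` given the observations, so the mean square of `π_n^k - π_n^λ` is a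
difference of second moments with the same Cesàro limit, and `E_k ‖π_n^k - π_n^λ‖` tends to `0` in
Cesàro mean. This passes to `E_μ ‖π_n^μ - π_n^λ‖` by convexity. For the almost sure statement, let
`R_n` be the likelihood ratio of `Q_μ` to `Q_λ`. Then
`R_n ‖π_n^μ - π_n^λ‖ = 2 ∑ᵢ (R_n π_n^μ - c π_n^λ)⁺ᵢ` at `c = R_n`; for fixed `c` the right side is
a nonnegative `Q_λ`-supermartingale, and it is Lipschitz in `c`, so `R_n ‖π_n^μ - π_n^λ‖` converges
almost surely, to `0` by Fatou's lemma.
-/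

section General

theorem exists_tendsto_of_lipschitzWith_of_dense {X Y : Type*} [PseudoMetricSpace X]
    [PseudoMetricSpace Y] [CompleteSpace Y] {h : ℕ → X → Y} {C : NNReal}
    (hh : ∀ n, LipschitzWith C (h n)) {D : Set X} (hD : Dense D)
    (hlim : ∀ d ∈ D, ∃ l, Tendsto (h · d) atTop (𝓝 l)) {r : ℕ → X} {s : X}
    (hr : Tendsto r atTop (𝓝 s)) : ∃ l, Tendsto (fun n => h n (r n)) atTop (𝓝 l) := by
  refine cauchySeq_tendsto_of_complete (Metric.cauchySeq_iff'.2 fun ε hε => ?_)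
  obtain ⟨δ, hδ, hCδ⟩ : ∃ δ > 0, C * δ < ε / 8 := by
    refine ⟨ε / (16 * (C + 1)), by positivity, ?_⟩
    rw [mul_div_assoc', div_lt_div_iff₀ (by positivity) (by positivity)]
    nlinarith [C.2, mul_nonneg C.2 hε.le]
  obtain ⟨d, hdD, hd⟩ := hD.exists_dist_lt s hδ
  obtain ⟨l, hl⟩ := hlim d hdD
  have hclose : ∀ᶠ n in atTop, dist (h n (r n)) l < ε / 2 := by
    filter_upwards [Metric.tendsto_nhds.1 hl (ε / 8) (by positivity),
      Metric.tendsto_nhds.1 hr δ hδ] with n hn hrn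
    calc dist (h n (r n)) l
        ≤ dist (h n (r n)) (h n d) + dist (h n d) l := dist_triangle _ _ _
      _ ≤ C * (dist (r n) s + dist s d) + dist (h n d) l := by
          gcongr
          exact ((hh n).dist_le_mul _ _).trans (by gcongr; exact dist_triangle _ _ _)
      _ ≤ C * (δ + δ) + ε / 8 := by gcongr
      _ < ε / 2 := by linarith
  obtain ⟨N, hN⟩ := eventually_atTop.1 hclose
  refine ⟨N, fun n hn => ?_⟩
  calc dist (h n (r n)) (h N (r N)) ≤ dist (h n (r n)) l + dist (h N (r N)) l :=
        dist_triangle_right _ _ _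
    _ < ε := by linarith [hN n hn, hN N le_rfl]

/-- The Cesàro average `(m₀ + ⋯ + mₙ) / (n + 1)` of a sequence of probability measures. -/
noncomputable def cesaroMean {Ω : Type*} [MeasurableSpace Ω] (m : ℕ → ProbabilityMeasure Ω)
    (n : ℕ) : ProbabilityMeasure Ω :=
  ⟨((n : ℝ≥0∞) + 1)⁻¹ • ∑ k ∈ Finset.range (n + 1), (m k : Measure Ω), ⟨by
    rw [Measure.smul_apply, Measure.finsetSum_apply]
    simp only [measure_univ, Finset.sum_const, Finset.card_range, nsmul_eq_mul, mul_one,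
      smul_eq_mul, Nat.cast_add, Nat.cast_one]
    exact ENNReal.inv_mul_cancel (by simp) (by finiteness)⟩⟩

variable {Ω : Type*} [MeasurableSpace Ω] (m : ℕ → ProbabilityMeasure Ω)

theorem lintegral_cesaroMean (f : Ω → ℝ≥0∞) (n : ℕ) :
    ∫⁻ x, f x ∂(cesaroMean m n : Measure Ω) =
      ((n : ℝ≥0∞) + 1)⁻¹ * ∑ k ∈ Finset.range (n + 1), ∫⁻ x, f x ∂(m k : Measure Ω) := by
  rw [cesaroMean, ProbabilityMeasure.coe_mk, lintegral_smul_measure, lintegral_finsetSum_measure,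
    smul_eq_mul]

theorem tsum_mul_lintegral_cesaroMean {ι : Type*} (c : ι → ℝ≥0∞)
    (m : ι → ℕ → ProbabilityMeasure Ω) (f : Ω → ℝ≥0∞) (n : ℕ) :
    ∑' k, c k * ∫⁻ x, f x ∂(cesaroMean (m k) n : Measure Ω) =
      ((n : ℝ≥0∞) + 1)⁻¹ * ∑ i ∈ Finset.range (n + 1),
        ∑' k, c k * ∫⁻ x, f x ∂(m k i : Measure Ω) := by
  simp only [lintegral_cesaroMean, mul_left_comm _ ((n : ℝ≥0∞) + 1)⁻¹, ENNReal.tsum_mul_left,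
    Finset.mul_sum _ _ (c _)]
  rw [Summable.tsum_finsetSum fun i _ => ENNReal.summable]

variable {m} in
theorem integral_cesaroMean {f : Ω → ℝ} (hf : ∀ k, Integrable f (m k : Measure Ω)) (n : ℕ) :
    ∫ x, f x ∂(cesaroMean m n : Measure Ω) =
      ((n : ℝ) + 1)⁻¹ * ∑ k ∈ Finset.range (n + 1), ∫ x, f x ∂(m k : Measure Ω) := by
  rw [cesaroMean, ProbabilityMeasure.coe_mk, integral_smul_measure,
    integral_finsetSum_measure fun k _ => hf k, smul_eq_mul]
  norm_num [ENNReal.toReal_add]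

theorem lintegral_cesaroMean_le {f : Ω → ℝ≥0∞} {c : ℝ≥0∞}
    (h : ∀ k, ∫⁻ x, f x ∂(m k : Measure Ω) ≤ c) (n : ℕ) :
    ∫⁻ x, f x ∂(cesaroMean m n : Measure Ω) ≤ c := by
  rw [lintegral_cesaroMean]
  calc ((n : ℝ≥0∞) + 1)⁻¹ * ∑ k ∈ Finset.range (n + 1), ∫⁻ x, f x ∂(m k : Measure Ω)
      ≤ ((n : ℝ≥0∞) + 1)⁻¹ * ∑ _k ∈ Finset.range (n + 1), c := by gcongr; exact h _
    _ = c := by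
      rw [Finset.sum_const, Finset.card_range, nsmul_eq_mul, ← mul_assoc]
      push_cast
      rw [ENNReal.inv_mul_cancel (by simp) (by finiteness), one_mul]

theorem liminf_lintegral_eq_zero_of_cesaroMean {f : Ω → ℝ≥0∞}
    (h : Tendsto (fun n => ∫⁻ x, f x ∂(cesaroMean m n : Measure Ω)) atTop (𝓝 0)) :
    liminf (fun n => ∫⁻ x, f x ∂(m n : Measure Ω)) atTop = 0 := by
  by_contra hne
  obtain ⟨ε, hε, hlt⟩ := ENNReal.lt_iff_exists_nnreal_btwn.1 (pos_iff_ne_zero.2 hne)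
  obtain ⟨N, hN⟩ := eventually_atTop.1 (eventually_lt_of_lt_liminf hlt)
  have hε2 : (0 : ℝ≥0∞) < ε / 2 := ENNReal.half_pos hε.ne'
  obtain ⟨n, hnN, hn⟩ := ((eventually_ge_atTop (2 * N)).and (h.eventually_lt_const hε2)).exists
  refine hn.not_ge ?_
  have hcard : n + 1 ≤ (Finset.Ico N (n + 1)).card * 2 := by rw [Nat.card_Ico]; omega
  rw [lintegral_cesaroMean]
  calc (ε / 2 : ℝ≥0∞) = ((n : ℝ≥0∞) + 1)⁻¹ * ((n + 1 : ℕ) * (ε / 2)) := by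
        rw [← mul_assoc, Nat.cast_succ, ENNReal.inv_mul_cancel (by simp) (by finiteness), one_mul]
    _ ≤ ((n : ℝ≥0∞) + 1)⁻¹ * (((Finset.Ico N (n + 1)).card * 2 : ℕ) * (ε / 2)) := by gcongr
    _ = ((n : ℝ≥0∞) + 1)⁻¹ * ∑ _k ∈ Finset.Ico N (n + 1), (ε : ℝ≥0∞) := by
        rw [Finset.sum_const, nsmul_eq_mul, Nat.cast_mul, mul_assoc, Nat.cast_two,
          ENNReal.mul_div_cancel two_ne_zero ENNReal.ofNat_ne_top]
    _ ≤ ((n : ℝ≥0∞) + 1)⁻¹ * ∑ k ∈ Finset.Ico N (n + 1), ∫⁻ x, f x ∂(m k : Measure Ω) := by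
        gcongr with k hk
        exact (hN k (Finset.mem_Ico.1 hk).1).le
    _ ≤ _ := by
        gcongr
        exact fun k hk => Finset.mem_range.2 (Finset.mem_Ico.1 hk).2

end General

/-! ### Probability vectors as weights -/

/-- The total mass `w 1 = ∑ⱼ wⱼ` of a row vector of nonnegative weights. -/
noncomputable def totalMass {E : Type*} (w : E → ℝ≥0∞) : ℝ≥0∞ := ∑' j, w j

section TotalMass

variable {E : Type*}

theorem apply_le_totalMass (w : E → ℝ≥0∞) (j : E) : w j ≤ totalMass w := ENNReal.le_tsum j

theorem apply_ne_top_of_totalMass_ne_top {w : E → ℝ≥0∞} (hw : totalMass w ≠ ⊤) (j : E) :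
    w j ≠ ⊤ :=
  ne_top_of_le_ne_top hw (apply_le_totalMass w j)

theorem totalMass_smul (c : ℝ≥0∞) (w : E → ℝ≥0∞) : totalMass (c • w) = c * totalMass w :=
  ENNReal.tsum_mul_left

theorem hasSum_toReal_totalMass {w : E → ℝ≥0∞} (hw : totalMass w ≠ ⊤) :
    HasSum (fun j => (w j).toReal) (totalMass w).toReal := by
  rw [totalMass, ENNReal.tsum_toReal_eq (apply_ne_top_of_totalMass_ne_top hw)]
  exact ENNReal.hasSum_toReal hw

theorem measurable_totalMass [Countable E] :
    Measurable (totalMass : (E → ℝ≥0∞) → ℝ≥0∞) := by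
  unfold totalMass
  fun_prop

end TotalMass

namespace ProbVec

variable {E : Type*}

/-- A probability vector as a vector of extended nonnegative weights. -/
noncomputable def weights (p : ProbVec E) : E → ℝ≥0∞ := fun i => ENNReal.ofReal (p.1 i)

theorem totalMass_weights (p : ProbVec E) : totalMass p.weights = 1 := by
  unfold totalMass weights
  rw [← ENNReal.ofReal_tsum_of_nonneg p.2.1 p.2.2.summable, p.2.2.tsum_eq, ENNReal.ofReal_one]

theorem toReal_weights (p : ProbVec E) (i : E) : (p.weights i).toReal = p.1 i :=
  ENNReal.toReal_ofReal (p.2.1 i)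

theorem apply_nonneg (p : ProbVec E) (i : E) : 0 ≤ p.1 i := p.2.1 i

theorem weights_ne_top (p : ProbVec E) (i : E) : p.weights i ≠ ⊤ := ENNReal.ofReal_ne_top

theorem weights_le_one (p : ProbVec E) (i : E) : p.weights i ≤ 1 :=
  p.totalMass_weights ▸ apply_le_totalMass p.weights i

theorem apply_le_one (p : ProbVec E) (i : E) : p.1 i ≤ 1 := by
  simpa [weights] using p.weights_le_one i

theorem exists_apply_ne_zero (p : ProbVec E) : ∃ i, p.1 i ≠ 0 := by
  by_contra! h
  exact one_ne_zero (p.2.2.unique (funext h ▸ hasSum_zero))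

/-- The unit mass at `i`. -/
noncomputable def pointMass [DecidableEq E] (i : E) : ProbVec E :=
  ⟨Pi.single i 1, fun j => by rw [Pi.single_apply]; positivity, hasSum_pi_single i 1⟩

theorem weights_pointMass [DecidableEq E] (i : E) :
    (pointMass i).weights = Pi.single i 1 := by
  funext j
  obtain rfl | hj := eq_or_ne j i <;> simp [weights, pointMass, *]

instance [Nonempty E] : Nonempty (ProbVec E) := by
  classical exact ⟨pointMass (Classical.arbitrary E)⟩

open Classical in
/-- The normalisation `w / (w 1)` of a row vector of weights, with an arbitrary value when
`w 1 ∈ {0, ∞}`. -/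
noncomputable def ofWeights [Nonempty E] (w : E → ℝ≥0∞) : ProbVec E :=
  if h : totalMass w ≠ 0 ∧ totalMass w ≠ ⊤ then
    ⟨fun j => (w j).toReal / (totalMass w).toReal, fun j => by positivity, by
      simpa [(ENNReal.toReal_pos h.1 h.2).ne'] using
        (hasSum_toReal_totalMass h.2).div_const (totalMass w).toReal⟩
  else Classical.arbitrary _

section OfWeights

variable [Nonempty E] {w : E → ℝ≥0∞}

theorem ofWeights_apply (h0 : totalMass w ≠ 0) (ht : totalMass w ≠ ⊤) (j : E) :
    (ofWeights w).1 j = (w j).toReal / (totalMass w).toReal := by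
  rw [ofWeights, dif_pos ⟨h0, ht⟩]

theorem totalMass_mul_ofWeights (ht : totalMass w ≠ ⊤) (j : E) :
    (totalMass w).toReal * (ofWeights w).1 j = (w j).toReal := by
  obtain h0 | h0 := eq_or_ne (totalMass w) 0
  · have hj : w j = 0 := le_zero_iff.1 (h0 ▸ apply_le_totalMass w j)
    simp [h0, hj]
  · rw [ofWeights_apply h0 ht, mul_div_cancel₀ _ (ENNReal.toReal_pos h0 ht).ne']

theorem totalMass_smul_weights_ofWeights (ht : totalMass w ≠ ⊤) :
    totalMass w • (ofWeights w).weights = w := by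
  funext j
  have h := totalMass_mul_ofWeights ht j
  rw [Pi.smul_apply, smul_eq_mul, weights, ← ENNReal.ofReal_toReal ht,
    ← ENNReal.ofReal_mul ENNReal.toReal_nonneg, h,
    ENNReal.ofReal_toReal (apply_ne_top_of_totalMass_ne_top ht j)]

theorem eq_ofWeights (h0 : totalMass w ≠ 0) (ht : totalMass w ≠ ⊤) {p : ProbVec E}
    (hp : ∀ j, p.1 j * (totalMass w).toReal = (w j).toReal) : p = ofWeights w :=
  Subtype.ext <| funext fun j => by
    rw [ofWeights_apply h0 ht, eq_div_iff (ENNReal.toReal_pos h0 ht).ne', hp]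

theorem ofWeights_smul {c : ℝ≥0∞} (hc0 : c ≠ 0) (hct : c ≠ ⊤) (h0 : totalMass w ≠ 0)
    (ht : totalMass w ≠ ⊤) : ofWeights (c • w) = ofWeights w := by
  refine eq_ofWeights h0 ht fun j => ?_
  have hm := totalMass_smul c w
  have hc := (ENNReal.toReal_pos hc0 hct).ne'
  rw [ofWeights_apply (hm ▸ mul_ne_zero hc0 h0) (hm ▸ ENNReal.mul_ne_top hct ht), hm]
  simp only [Pi.smul_apply, smul_eq_mul, ENNReal.toReal_mul]
  have := (ENNReal.toReal_pos h0 ht).ne'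
  field_simp

theorem weights_ofWeights_of_totalMass_eq_one (h : totalMass w = 1) :
    (ofWeights w).weights = w := by
  simpa [h] using totalMass_smul_weights_ofWeights (w := w) (by simp [h])

end OfWeights

section Measurability

theorem measurable_apply (j : E) : Measurable fun p : ProbVec E => p.1 j :=
  (measurable_pi_apply j).comp measurable_subtype_coe

theorem measurable_apply_sub_apply (j : E) :
    Measurable fun p : ProbVec E × ProbVec E => p.1.1 j - p.2.1 j :=
  ((measurable_apply j).comp measurable_fst).sub ((measurable_apply j).comp measurable_snd)

theorem measurable_weights_apply (j : E) : Measurable fun p : ProbVec E => p.weights j :=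
  (measurable_apply j).ennreal_ofReal

theorem measurable_weights : Measurable (weights : ProbVec E → E → ℝ≥0∞) :=
  measurable_pi_lambda _ measurable_weights_apply

theorem measurable_ofWeights [Countable E] [Nonempty E] :
    Measurable (ofWeights : (E → ℝ≥0∞) → ProbVec E) := by
  classical
  refine Measurable.subtype_mk (f := fun w : E → ℝ≥0∞ => (ofWeights w).1)
    (h := fun w => (ofWeights w).2) (measurable_pi_lambda _ fun j => ?_)
  have hite : (fun w : E → ℝ≥0∞ => (ofWeights w).1 j) = fun w =>
      if totalMass w ≠ 0 ∧ totalMass w ≠ ⊤ then (w j).toReal / (totalMass w).toReal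
      else (Classical.arbitrary (ProbVec E)).1 j := by
    funext w
    split_ifs with h
    · exact ofWeights_apply h.1 h.2 j
    · rw [ofWeights, dif_neg h]
  rw [hite]
  refine Measurable.ite ?_ ?_ measurable_const
  · exact (measurable_totalMass (measurableSet_singleton (0 : ℝ≥0∞)).compl).inter
      (measurable_totalMass (measurableSet_singleton (⊤ : ℝ≥0∞)).compl)
  · exact (measurable_pi_apply j).ennreal_toReal.div measurable_totalMass.ennreal_toReal

end Measurability

end ProbVec

/-! ### Total variation and weak convergence -/

namespace ProbVec

variable {E : Type*}

theorem summable_abs_sub (p q : ProbVec E) : Summable fun i => |p.1 i - q.1 i| :=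
  (p.2.2.summable.sub q.2.2.summable).abs

theorem tvDist_nonneg (p q : ProbVec E) : 0 ≤ tvDist p q := tsum_nonneg fun _ => abs_nonneg _

theorem tvDist_self (p : ProbVec E) : tvDist p p = 0 := by simp [tvDist]

theorem tvDist_comm (p q : ProbVec E) : tvDist p q = tvDist q p := by
  simp only [tvDist, abs_sub_comm]

theorem tvDist_triangle (p q r : ProbVec E) : tvDist p r ≤ tvDist p q + tvDist q r := by
  unfold tvDist
  rw [← (summable_abs_sub p q).tsum_add (summable_abs_sub q r)]
  exact (summable_abs_sub p r).tsum_le_tsum (fun i => abs_sub_le _ _ _)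
    ((summable_abs_sub p q).add (summable_abs_sub q r))

theorem abs_sub_le_tvDist (p q : ProbVec E) (i : E) : |p.1 i - q.1 i| ≤ tvDist p q :=
  (summable_abs_sub p q).le_tsum i fun _ _ => abs_nonneg _

theorem summable_posPart_sub (p q : ProbVec E) : Summable fun i => (p.1 i - q.1 i)⁺ :=
  (summable_abs_sub p q).of_nonneg_of_le (fun _ => posPart_nonneg _) fun _ => by
    rw [← posPart_add_negPart]; exact le_add_of_nonneg_right (negPart_nonneg _)

theorem tvDist_eq_two_mul_tsum_posPart (p q : ProbVec E) :
    tvDist p q = 2 * ∑' i, (p.1 i - q.1 i)⁺ := by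
  have hzero : HasSum (fun i => p.1 i - q.1 i) 0 := by simpa using p.2.2.sub q.2.2
  have h := ((summable_posPart_sub p q).hasSum.mul_left 2).sub hzero
  rw [sub_zero] at h
  rw [← h.tsum_eq, tvDist]
  refine tsum_congr fun i => ?_
  conv_rhs => arg 2; rw [← posPart_sub_negPart (p.1 i - q.1 i)]
  rw [← posPart_add_negPart]
  ring

theorem tvDist_le_two (p q : ProbVec E) : tvDist p q ≤ 2 := by
  have h : ∑' i, (p.1 i - q.1 i)⁺ ≤ ∑' i, p.1 i := (summable_posPart_sub p q).tsum_le_tsum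
    (fun i => sup_le (sub_le_self _ (q.2.1 i)) (p.2.1 i)) p.2.2.summable
  rw [tvDist_eq_two_mul_tsum_posPart]
  linarith [p.2.2.tsum_eq]

theorem tendsto_nhds_iff_apply {ι : Type*} {l : Filter ι} {u : ι → ProbVec E} {p : ProbVec E} :
    Tendsto u l (𝓝 p) ↔ ∀ i, Tendsto (fun k => (u k).1 i) l (𝓝 (p.1 i)) := by
  rw [tendsto_subtype_rng, tendsto_pi_nhds]

/- Scheffé: `‖p - u‖ = 2 ∑ᵢ (pᵢ - uᵢ)⁺`, and the summands are dominated by `pᵢ`. -/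
theorem tendsto_nhds_iff_tvDist {ι : Type*} {l : Filter ι} {u : ι → ProbVec E} {p : ProbVec E} :
    Tendsto u l (𝓝 p) ↔ Tendsto (fun k => tvDist (u k) p) l (𝓝 0) := by
  rw [tendsto_nhds_iff_apply]
  refine ⟨fun h => ?_, fun h i => ?_⟩
  · have hsum : Tendsto (fun k => ∑' i, (p.1 i - (u k).1 i)⁺) l (𝓝 (∑' _ : E, (0 : ℝ))) := by
      refine tendsto_tsum_of_dominated_convergence p.2.2.summable (fun i => ?_)
        (.of_forall fun k i => ?_)
      · simpa [posPart_def] using ((h i).const_sub (p.1 i)).max (tendsto_const_nhds (x := (0 : ℝ)))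
      · rw [Real.norm_of_nonneg (posPart_nonneg _)]
        exact sup_le (sub_le_self _ ((u k).2.1 i)) (p.2.1 i)
    simp only [tvDist_comm _ p, tvDist_eq_two_mul_tsum_posPart]
    simpa using hsum.const_mul 2
  · rw [tendsto_iff_dist_tendsto_zero]
    exact squeeze_zero (fun _ => dist_nonneg) (fun k => abs_sub_le_tvDist (u k) p i) h

/-- The total variation metric on `P(E)`; its topology is the one `P(E)` already carries. -/
noncomputable abbrev tvMetric : PseudoMetricSpace (ProbVec E) :=
  let m : PseudoMetricSpace (ProbVec E) :=
    { dist := tvDist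
      dist_self := tvDist_self
      dist_comm := tvDist_comm
      dist_triangle := tvDist_triangle }
  m.replaceTopology <| by
    refine TopologicalSpace.ext_nhds fun p => eq_of_forall_le_iff fun l => ?_
    exact (tendsto_nhds_iff_tvDist (u := id)).trans
      (@tendsto_iff_dist_tendsto_zero _ _ m id l p).symm

instance : TopologicalSpace.PseudoMetrizableSpace (ProbVec E) :=
  letI : PseudoMetricSpace (ProbVec E) := tvMetric
  inferInstance

/-- Real functions on `P(E)` that are bounded and Lipschitz in total variation, with the same
constant. -/
def IsBddLipschitz (f : ProbVec E → ℝ) (C : ℝ) : Prop :=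
  (∀ p, |f p| ≤ C) ∧ ∀ p q, |f p - f q| ≤ C * tvDist p q

theorem IsBddLipschitz.nonneg {f : ProbVec E → ℝ} {C : ℝ} [Nonempty E] (hf : IsBddLipschitz f C) :
    0 ≤ C :=
  (abs_nonneg _).trans (hf.1 (Classical.arbitrary _))

theorem IsBddLipschitz.continuous {f : ProbVec E → ℝ} {C : ℝ} (hf : IsBddLipschitz f C) :
    Continuous f := by
  refine continuous_iff_continuousAt.2 fun p => ?_
  rw [ContinuousAt, tendsto_iff_dist_tendsto_zero]
  have h := (tendsto_nhds_iff_tvDist.1 (tendsto_id (x := 𝓝 p))).const_mul C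
  rw [mul_zero] at h
  exact squeeze_zero (fun _ => dist_nonneg) (fun q => hf.2 q p) h

variable [Countable E]

theorem IsBddLipschitz.integrable {f : ProbVec E → ℝ} {C : ℝ} (hf : IsBddLipschitz f C)
    (m : Measure (ProbVec E)) [IsFiniteMeasure m] : Integrable f m :=
  .of_bound hf.continuous.measurable.aestronglyMeasurable C (.of_forall hf.1)

theorem tendsto_of_forall_isBddLipschitz {ι : Type*} {l : Filter ι} [l.IsCountablyGenerated]
    {m : ι → ProbabilityMeasure (ProbVec E)} {m₀ : ProbabilityMeasure (ProbVec E)}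
    (h : ∀ f C, IsBddLipschitz f C → Tendsto (fun k => ∫ p, f p ∂(m k : Measure (ProbVec E))) l
      (𝓝 (∫ p, f p ∂(m₀ : Measure (ProbVec E))))) :
    Tendsto m l (𝓝 m₀) := by
  let _ : PseudoMetricSpace (ProbVec E) := tvMetric
  refine tendsto_iff_forall_lipschitz_integral_tendsto.2 fun f ⟨C, hC⟩ ⟨L, hL⟩ => ?_
  obtain ⟨p₀⟩ := nonempty_of_isProbabilityMeasure (m₀ : Measure (ProbVec E))
  refine h f (max (C + |f p₀|) L) ⟨fun p => ?_, fun p q => ?_⟩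
  · calc |f p| ≤ |f p - f p₀| + |f p₀| := by simpa using abs_add_le (f p - f p₀) (f p₀)
      _ ≤ C + |f p₀| := by gcongr; exact hC p p₀
      _ ≤ _ := le_max_left _ _
  · exact (hL.dist_le_mul p q).trans
      (mul_le_mul_of_nonneg_right (le_max_right _ _) (tvDist_nonneg p q))

theorem probabilityMeasure_ext_of_isBddLipschitz {m m' : ProbabilityMeasure (ProbVec E)}
    (h : ∀ f C, IsBddLipschitz f C → ∫ p, f p ∂(m : Measure (ProbVec E)) =
      ∫ p, f p ∂(m' : Measure (ProbVec E))) : m = m' :=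
  tendsto_nhds_unique (tendsto_const_nhds (f := (atTop : Filter ℕ))) <|
    tendsto_of_forall_isBddLipschitz fun f C hf => by
      rw [h f C hf]; exact tendsto_const_nhds

end ProbVec

namespace ProbVec

variable {E : Type*}

theorem isCompact_setOf_tail_le {J : ℕ → Finset E} {r : ℕ → ℝ} (hr : Tendsto r atTop (𝓝 0)) :
    IsCompact {p : ProbVec E | ∀ n, 1 - ∑ j ∈ J n, p.1 j ≤ r n} := by
  have himage : Subtype.val '' {p : ProbVec E | ∀ n, 1 - ∑ j ∈ J n, p.1 j ≤ r n} =
      (Set.pi Set.univ fun _ : E => Set.Icc (0 : ℝ) 1) ∩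
        ((⋂ n, {p | 1 - ∑ j ∈ J n, p j ≤ r n}) ∩ ⋂ s : Finset E, {p | ∑ j ∈ s, p j ≤ 1}) := by
    ext p
    simp only [Set.mem_inter_iff, Set.mem_iInter, Set.mem_univ_pi]
    constructor
    · rintro ⟨p, hp, rfl⟩
      exact ⟨fun i => ⟨p.2.1 i, apply_le_one p i⟩, hp,
        fun s => sum_le_hasSum s (fun i _ => p.2.1 i) p.2.2⟩
    · rintro ⟨hIcc, htail, hsum⟩
      have hp0 : ∀ i, 0 ≤ p i := fun i => (hIcc i).1
      have hp : Summable p := summable_of_sum_le hp0 hsum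
      refine ⟨⟨p, hp0, hp.hasSum_iff.2 (le_antisymm (hp.tsum_le_of_sum_le hsum) ?_)⟩, htail, rfl⟩
      refine le_of_tendsto' (by simpa using hr.const_sub 1) fun n => ?_
      have hn : 1 - ∑ j ∈ J n, p j ≤ r n := htail n
      linarith [hp.sum_le_tsum (J n) fun i _ => hp0 i]
  rw [Subtype.isCompact_iff, himage]
  refine (isCompact_univ_pi fun _ => isCompact_Icc).inter_right
    ((isClosed_iInter fun n => ?_).inter (isClosed_iInter fun s => ?_))
  · exact isClosed_le (by fun_prop) continuous_const
  · exact isClosed_le (by fun_prop) continuous_const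

theorem ofReal_one_sub_sum (p : ProbVec E) (J : Finset E) :
    ENNReal.ofReal (1 - ∑ j ∈ J, p.1 j) = ∑' j : {j // j ∉ J}, p.weights j := by
  have h := p.2.2.summable.sum_add_tsum_subtype_compl J
  rw [p.2.2.tsum_eq, add_comm] at h
  rw [← eq_sub_of_add_eq h,
    ENNReal.ofReal_tsum_of_nonneg (fun i => p.2.1 _) (p.2.2.summable.subtype _)]
  rfl

variable {b : E → ℝ≥0∞}

theorem measure_tail_gt_le (J : Finset E) {m : Measure (ProbVec E)} [Countable E]
    (hm : ∀ j, ∫⁻ p, p.weights j ∂m ≤ b j) {r : ℝ} (hr : 0 < r) :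
    m {p | r < 1 - ∑ j ∈ J, p.1 j} ≤ (∑' j : {j // j ∉ J}, b j) / ENNReal.ofReal r := by
  have hmeas := fun j : {j // j ∉ J} => (measurable_weights_apply (E := E) j).aemeasurable (μ := m)
  calc m {p | r < 1 - ∑ j ∈ J, p.1 j}
      ≤ m {p | ENNReal.ofReal r ≤ ∑' j : {j // j ∉ J}, p.weights j} := by
        refine measure_mono fun p hp => ?_
        rw [Set.mem_ofPred_eq, ← ofReal_one_sub_sum]
        exact ENNReal.ofReal_le_ofReal (le_of_lt hp)
    _ ≤ (∫⁻ p, ∑' j : {j // j ∉ J}, p.weights j ∂m) / ENNReal.ofReal r :=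
        meas_ge_le_lintegral_div (AEMeasurable.tsum hmeas)
          (ENNReal.ofReal_pos.2 hr).ne' ENNReal.ofReal_ne_top
    _ ≤ _ := by
        rw [lintegral_tsum hmeas]
        gcongr with j
        exact hm j

theorem isTightMeasureSet_of_lintegral_weights_le [Countable E] (hb : totalMass b ≠ ⊤) :
    IsTightMeasureSet {m : Measure (ProbVec E) | ∀ j, ∫⁻ p, p.weights j ∂m ≤ b j} := by
  refine isTightMeasureSet_iff_exists_isCompact_measure_compl_le.2 fun ε hε => ?_
  obtain ⟨δ, hδ, hδε⟩ := ENNReal.exists_pos_sum_of_countable hε.ne' ℕ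
  have hJ : ∀ n : ℕ, ∃ J : Finset E,
      ∑' j : {j // j ∉ J}, b j < δ n * ENNReal.ofReal (1 / ((n : ℝ) + 1)) := fun n =>
    ((ENNReal.tendsto_tsum_compl_atTop_zero hb).eventually_lt_const <|
      ENNReal.mul_pos (by simpa using (hδ n).ne')
        (ENNReal.ofReal_pos.2 (by positivity)).ne').exists
  choose J hJ using hJ
  refine ⟨_, isCompact_setOf_tail_le (J := J) tendsto_one_div_add_atTop_nhds_zero_nat,
    fun m hm => ?_⟩
  calc m {p | ∀ n, 1 - ∑ j ∈ J n, p.1 j ≤ 1 / ((n : ℝ) + 1)}ᶜ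
      = m (⋃ n : ℕ, {p | 1 / ((n : ℝ) + 1) < 1 - ∑ j ∈ J n, p.1 j}) := by
        simp only [Set.ofPred_forall, Set.compl_iInter, Set.compl_ofPred, not_le]
    _ ≤ ∑' n : ℕ, m {p | 1 / ((n : ℝ) + 1) < 1 - ∑ j ∈ J n, p.1 j} := measure_iUnion_le _
    _ ≤ ∑' n, (δ n : ℝ≥0∞) := ENNReal.tsum_le_tsum fun n =>
        (measure_tail_gt_le (J n) hm (by positivity)).trans
          (ENNReal.div_le_of_le_mul (hJ n).le)
    _ ≤ ε := hδε.le

end ProbVec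

section TotalMassSub

variable {E : Type*}

theorem totalMass_mono {w u : E → ℝ≥0∞} (h : w ≤ u) : totalMass w ≤ totalMass u :=
  ENNReal.tsum_le_tsum h

theorem totalMass_add (w u : E → ℝ≥0∞) : totalMass (w + u) = totalMass w + totalMass u :=
  ENNReal.tsum_add

theorem tsum_sub_le_tsum_sub {ι : Type*} (a b : ι → ℝ≥0∞) :
    ∑' k, a k - ∑' k, b k ≤ ∑' k, (a k - b k) := by
  rw [tsub_le_iff_right, ← ENNReal.tsum_add]
  exact ENNReal.tsum_le_tsum fun _ => le_tsub_add

theorem totalMass_sub_le_totalMass_sub (w u : E → ℝ≥0∞) :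
    totalMass w - totalMass u ≤ totalMass (w - u) :=
  tsum_sub_le_tsum_sub w u

theorem totalMass_sub_triangle (w u v : E → ℝ≥0∞) :
    totalMass (w - v) ≤ totalMass (w - u) + totalMass (u - v) :=
  (totalMass_mono tsub_le_tsub_add_tsub).trans_eq (totalMass_add _ _)

end TotalMassSub

namespace ProbVec

variable {E : Type*}

theorem ofReal_tvDist (p q : ProbVec E) :
    ENNReal.ofReal (tvDist p q) = 2 * totalMass (p.weights - q.weights) := by
  rw [tvDist_eq_two_mul_tsum_posPart, ENNReal.ofReal_mul zero_le_two, ENNReal.ofReal_ofNat,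
    ENNReal.ofReal_tsum_of_nonneg (fun _ => posPart_nonneg _) (summable_posPart_sub p q)]
  congr 2
  funext i
  rw [Pi.sub_apply, weights, weights, ← ENNReal.ofReal_sub _ (q.2.1 i), posPart_def,
    ENNReal.ofReal_max, ENNReal.ofReal_zero, max_eq_left zero_le]

theorem totalMass_sub_add_totalMass_sub (p q : ProbVec E) :
    totalMass (p.weights - q.weights) + totalMass (q.weights - p.weights) =
      ENNReal.ofReal (tvDist p q) := by
  have hpq := (ofReal_tvDist p q).symm.trans (tvDist_comm p q ▸ ofReal_tvDist q p)
  rw [ENNReal.mul_right_inj two_ne_zero ENNReal.ofNat_ne_top] at hpq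
  rw [ofReal_tvDist, ← hpq, two_mul]

variable [Nonempty E]

theorem totalMass_mul_ofReal_tvDist {w : E → ℝ≥0∞} (hw : totalMass w ≠ ⊤) (q : ProbVec E) :
    totalMass w * ENNReal.ofReal (tvDist (ofWeights w) q) =
      2 * totalMass (w - totalMass w • q.weights) := by
  rw [ofReal_tvDist, mul_left_comm, ← totalMass_smul]
  congr 2
  conv_rhs => enter [1]; rw [← totalMass_smul_weights_ofWeights hw]
  funext j
  exact ENNReal.mul_sub fun _ _ => hw

theorem totalMass_mul_ofReal_tvDist_tsum_le {ι : Type*} {c : ι → ℝ≥0∞} {w : ι → E → ℝ≥0∞}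
    (hw : ∀ k, totalMass (w k) ≠ ⊤) (hcw : totalMass (fun j => ∑' k, c k * w k j) ≠ ⊤)
    (q : ProbVec E) :
    totalMass (fun j => ∑' k, c k * w k j) *
        ENNReal.ofReal (tvDist (ofWeights fun j => ∑' k, c k * w k j) q) ≤
      ∑' k, c k * (totalMass (w k) * ENNReal.ofReal (tvDist (ofWeights (w k)) q)) := by
  simp only [totalMass_mul_ofReal_tvDist hcw, totalMass_mul_ofReal_tvDist (hw _),
    mul_left_comm _ (2 : ℝ≥0∞), ENNReal.tsum_mul_left]
  gcongr
  simp only [totalMass, ← ENNReal.tsum_mul_left]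
  rw [ENNReal.tsum_comm (f := fun k j => c k * _)]
  refine ENNReal.tsum_le_tsum fun j => ?_
  have hmass : ∑' j, ∑' k, c k * w k j = ∑' k, c k * totalMass (w k) := by
    rw [ENNReal.tsum_comm]
    exact tsum_congr fun k => ENNReal.tsum_mul_left
  simp only [Pi.sub_apply, Pi.smul_apply, smul_eq_mul]
  rw [hmass, ← ENNReal.tsum_mul_right]
  refine (tsum_sub_le_tsum_sub _ _).trans (ENNReal.tsum_le_tsum fun k => ?_)
  rw [mul_assoc]
  exact le_mul_tsub

theorem totalMass_mul_ofReal_tvDist_ofWeights_le {w w' : E → ℝ≥0∞} (hw : totalMass w ≠ ⊤)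
    (hw' : totalMass w' ≠ ⊤) :
    totalMass w' * ENNReal.ofReal (tvDist (ofWeights w') (ofWeights w)) ≤
      2 * (totalMass (w' - w) + totalMass (w - w')) := by
  rw [totalMass_mul_ofReal_tvDist hw']
  gcongr
  refine (totalMass_sub_triangle w' w _).trans ?_
  gcongr
  calc totalMass (w - totalMass w' • (ofWeights w).weights)
      = totalMass ((totalMass w - totalMass w') • (ofWeights w).weights) := by
        congr 1
        conv_lhs => enter [1]; rw [← totalMass_smul_weights_ofWeights hw]
        funext j
        exact (ENNReal.sub_mul fun _ _ => weights_ne_top _ j).symm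
    _ = totalMass w - totalMass w' := by rw [totalMass_smul, totalMass_weights, mul_one]
    _ ≤ totalMass (w - w') := totalMass_sub_le_totalMass_sub w w'

end ProbVec

section MeanDistance

theorem tendsto_tsum_of_le {ι E : Type*} {l : Filter ι} [l.IsCountablyGenerated]
    {a : ι → E → ℝ≥0∞} {b g : E → ℝ≥0∞} (hb : totalMass b ≠ ⊤) (hab : ∀ i j, a i j ≤ b j)
    (ha : ∀ j, Tendsto (fun i => a i j) l (𝓝 (g j))) :
    Tendsto (fun i => ∑' j, a i j) l (𝓝 (∑' j, g j)) := by
  let _ : MeasurableSpace E := ⊤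
  have h := tendsto_lintegral_filter_of_dominated_convergence (μ := .count) (f := g) b
    (.of_forall fun i => measurable_from_top) (.of_forall fun i => ae_of_all _ (hab i))
    (by rwa [lintegral_count]) (ae_of_all _ ha)
  simpa only [lintegral_count] using h

theorem lintegral_ofReal_le_sqrt_integral_sq {Ω : Type*} {mΩ : MeasurableSpace Ω}
    {m : Measure Ω} [IsProbabilityMeasure m] {X : Ω → ℝ} (hX : MemLp X 2 m) :
    ∫⁻ ω, ENNReal.ofReal (X ω) ∂m ≤ ENNReal.ofReal √(∫ ω, X ω ^ 2 ∂m) := by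
  have hvar := ProbabilityTheory.variance_nonneg |X| m
  rw [ProbabilityTheory.variance_eq_sub hX.abs, sub_nonneg] at hvar
  simp only [Pi.pow_apply, Pi.abs_apply, sq_abs] at hvar
  calc ∫⁻ ω, ENNReal.ofReal (X ω) ∂m
      ≤ ∫⁻ ω, ENNReal.ofReal |X ω| ∂m :=
        lintegral_mono fun ω => ENNReal.ofReal_le_ofReal (le_abs_self _)
    _ = ENNReal.ofReal (∫ ω, |X ω| ∂m) :=
        (ofReal_integral_eq_lintegral_ofReal (hX.integrable one_le_two).abs
          (ae_of_all _ fun ω => abs_nonneg _)).symm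
    _ ≤ ENNReal.ofReal √(∫ ω, X ω ^ 2 ∂m) :=
        ENNReal.ofReal_le_ofReal (Real.le_sqrt_of_sq_le hvar)

variable {E : Type*} [Countable E]

theorem lintegral_ofReal_tvDist (m : Measure (ProbVec E × ProbVec E)) :
    ∫⁻ p, ENNReal.ofReal (tvDist p.1 p.2) ∂m =
      2 * ∑' j, ∫⁻ p, ENNReal.ofReal (p.1.1 j - p.2.1 j) ∂m := by
  have hmeas (j : E) := (ProbVec.measurable_apply_sub_apply (E := E) j).ennreal_ofReal
  simp only [ProbVec.ofReal_tvDist, totalMass, Pi.sub_apply, ProbVec.weights,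
    ← ENNReal.ofReal_sub _ (ProbVec.apply_nonneg _ _)]
  rw [lintegral_const_mul _ (.tsum hmeas), lintegral_tsum fun j => (hmeas j).aemeasurable]

theorem tendsto_lintegral_tvDist_zero {ι : Type*} {l : Filter ι} [l.IsCountablyGenerated]
    {m : ι → Measure (ProbVec E × ProbVec E)} [∀ i, IsProbabilityMeasure (m i)]
    {b : E → ℝ≥0∞} (hb : totalMass b ≠ ⊤)
    (hmb : ∀ i j, ∫⁻ p, p.1.weights j ∂m i ≤ b j)
    (hsq : ∀ j, Tendsto (fun i => ∫⁻ p, ENNReal.ofReal ((p.1.1 j - p.2.1 j) ^ 2) ∂m i) l (𝓝 0)) :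
    Tendsto (fun i => ∫⁻ p, ENNReal.ofReal (tvDist p.1 p.2) ∂m i) l (𝓝 0) := by
  simp only [lintegral_ofReal_tvDist]
  have hmeas (j : E) := (ProbVec.measurable_apply_sub_apply (E := E) j)
  suffices h : ∀ j, Tendsto (fun i => ∫⁻ p, ENNReal.ofReal (p.1.1 j - p.2.1 j) ∂m i) l (𝓝 0) by
    have hsum := tendsto_tsum_of_le hb (fun i j => (lintegral_mono fun p =>
      ENNReal.ofReal_le_ofReal (sub_le_self _ (p.2.2.1 j))).trans (hmb i j)) h
    simpa only [tsum_zero, mul_zero] using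
      ENNReal.Tendsto.const_mul (a := 2) hsum (.inr ENNReal.ofNat_ne_top)
  intro j
  have hmem (i : ι) : MemLp (fun p : ProbVec E × ProbVec E => p.1.1 j - p.2.1 j) 2 (m i) :=
    .of_bound (hmeas j).aestronglyMeasurable 1 <|
      ae_of_all _ fun p => abs_sub_le_of_nonneg_of_le (p.1.2.1 j) (ProbVec.apply_le_one p.1 j)
        (p.2.2.1 j) (ProbVec.apply_le_one p.2 j)
  have hsq' : Tendsto (fun i => ∫ p, (p.1.1 j - p.2.1 j) ^ 2 ∂m i) l (𝓝 0) :=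
    ((ENNReal.tendsto_toReal ENNReal.zero_ne_top).comp (hsq j)).congr fun i =>
      (integral_eq_lintegral_of_nonneg_ae (ae_of_all _ fun _ => sq_nonneg _)
        ((hmeas j).pow_const 2).aestronglyMeasurable).symm
  refine tendsto_of_tendsto_of_tendsto_of_le_of_le tendsto_const_nhds ?_ (fun _ => zero_le)
    fun i => lintegral_ofReal_le_sqrt_integral_sq (hmem i)
  simpa using ENNReal.tendsto_ofReal hsq'.sqrt

end MeanDistance

/-! ### Hidden Markov models -/

/-- The row-vector/matrix product `(w k)ⱼ = ∑ᵢ wᵢ kᵢⱼ` of nonnegative weights. -/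
noncomputable def vecMul {E : Type*} (w : E → ℝ≥0∞) (k : E → E → ℝ≥0∞) : E → ℝ≥0∞ :=
  fun j => ∑' i, w i * k i j

section VecMul

variable {E : Type*}

theorem vecMul_smul (c : ℝ≥0∞) (w : E → ℝ≥0∞) (k : E → E → ℝ≥0∞) :
    vecMul (c • w) k = c • vecMul w k := by
  funext j
  simp only [vecMul, Pi.smul_apply, smul_eq_mul, mul_assoc, ENNReal.tsum_mul_left]

theorem vecMul_tsum {ι : Type*} (c : ι → ℝ≥0∞) (w : ι → E → ℝ≥0∞) (k : E → E → ℝ≥0∞) :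
    vecMul (fun i => ∑' a, c a * w a i) k = fun j => ∑' a, c a * vecMul (w a) k j := by
  funext j
  simp only [vecMul, ← ENNReal.tsum_mul_left, ← ENNReal.tsum_mul_right, mul_assoc]
  exact ENNReal.tsum_comm

theorem vecMul_sub_vecMul_le (w u : E → ℝ≥0∞) (k : E → E → ℝ≥0∞) :
    vecMul w k - vecMul u k ≤ vecMul (w - u) k := fun j =>
  (tsum_sub_le_tsum_sub _ _).trans <| ENNReal.tsum_le_tsum fun i => by
    simpa only [mul_comm _ (k i j), Pi.sub_apply] using le_mul_tsub

theorem totalMass_vecMul (w : E → ℝ≥0∞) (k : E → E → ℝ≥0∞) :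
    totalMass (vecMul w k) = ∑' i, w i * totalMass (k i) := by
  simp only [totalMass, vecMul, ← ENNReal.tsum_mul_left]
  exact ENNReal.tsum_comm

theorem vecMul_weights_pointMass [DecidableEq E] (i : E) (k : E → E → ℝ≥0∞) :
    vecMul (ProbVec.pointMass i).weights k = k i := by
  funext j
  simp only [vecMul, ProbVec.weights_pointMass]
  rw [tsum_eq_single i fun a ha => by rw [Pi.single_eq_of_ne ha, zero_mul], Pi.single_eq_same,
    one_mul]

end VecMul

/-- The unnormalised filter `w K(y₁)⋯K(yₙ)` of the weighted transition matrices `K`. -/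
noncomputable def forward {E F : Type*} (K : F → E → E → ℝ≥0∞) (w : E → ℝ≥0∞) :
    (n : ℕ) → (Fin n → F) → E → ℝ≥0∞
  | 0, _ => w
  | n + 1, v => vecMul (forward K w n (Fin.init v)) (K (v (Fin.last n)))

/-- The density `μ K(y₁)⋯K(yₙ) 1` of the first `n` observations started from `μ`. -/
noncomputable def likelihood {E F : Type*} (K : F → E → E → ℝ≥0∞) (μ : ProbVec E) (n : ℕ)
    (v : Fin n → F) : ℝ≥0∞ :=
  totalMass (forward K μ.weights n v)

/-- The filter `π_n^μ` as a function of the first `n` observations. -/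
noncomputable def filterAt {E F : Type*} [Nonempty E] (K : F → E → E → ℝ≥0∞) (μ : ProbVec E)
    (n : ℕ) (v : Fin n → F) : ProbVec E :=
  ProbVec.ofWeights (forward K μ.weights n v)

/-- The first `n` observations of a path. -/
def initObs {F : Type*} (n : ℕ) (y : ℕ → F) : Fin n → F := fun k => y k

section Forward

variable {E F : Type*} {K : F → E → E → ℝ≥0∞}

theorem forward_snoc (w : E → ℝ≥0∞) (n : ℕ) (v : Fin n → F) (x : F) :
    forward K w (n + 1) (Fin.snoc v x) = vecMul (forward K w n v) (K x) := by
  rw [forward, Fin.init_snoc, Fin.snoc_last]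

theorem forward_tsum {ι : Type*} (c : ι → ℝ≥0∞) (w : ι → E → ℝ≥0∞) (n : ℕ) (v : Fin n → F) :
    forward K (fun i => ∑' a, c a * w a i) n v = fun j => ∑' a, c a * forward K (w a) n v j := by
  induction n with
  | zero => rfl
  | succ n ih => simp only [forward, ih, vecMul_tsum]

theorem weights_eq_tsum_pointMass [DecidableEq E] (μ : ProbVec E) :
    μ.weights = fun i => ∑' a, μ.weights a * (ProbVec.pointMass a).weights i := by
  funext i
  simp only [ProbVec.weights_pointMass]
  rw [tsum_eq_single i fun a ha => by rw [Pi.single_eq_of_ne' ha, mul_zero],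
    Pi.single_eq_same, mul_one]

theorem forward_weights_eq_tsum [DecidableEq E] (μ : ProbVec E) (n : ℕ) (v : Fin n → F) :
    forward K μ.weights n v =
      fun j => ∑' a, μ.weights a * forward K (ProbVec.pointMass a).weights n v j := by
  conv_lhs => rw [weights_eq_tsum_pointMass μ]
  exact forward_tsum _ _ n v

theorem likelihood_eq_tsum [DecidableEq E] (μ : ProbVec E) (n : ℕ) (v : Fin n → F) :
    likelihood K μ n v = ∑' a, μ.weights a * likelihood K (ProbVec.pointMass a) n v := by
  simp only [likelihood, forward_weights_eq_tsum μ, totalMass, ← ENNReal.tsum_mul_left]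
  exact ENNReal.tsum_comm

end Forward

section Measurability

variable {E F : Type*} [Countable E] [MeasurableSpace F] {K : F → E → E → ℝ≥0∞}

theorem measurable_vecMul (hK : ∀ i j, Measurable fun y => K y i j) {α : Type*}
    [MeasurableSpace α] {w : α → E → ℝ≥0∞} {y : α → F} (hw : Measurable w) (hy : Measurable y) :
    Measurable fun a => vecMul (w a) (K (y a)) :=
  measurable_pi_lambda _ fun j => Measurable.tsum fun i =>
    ((measurable_pi_apply i).comp hw).mul ((hK i j).comp hy)

theorem measurable_forward (hK : ∀ i j, Measurable fun y => K y i j) (w : E → ℝ≥0∞) (n : ℕ) :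
    Measurable (forward K w n) := by
  induction n with
  | zero => exact measurable_const
  | succ n ih =>
    exact measurable_vecMul hK (ih.comp (by unfold Fin.init; fun_prop)) (measurable_pi_apply _)

theorem measurable_likelihood (hK : ∀ i j, Measurable fun y => K y i j) (μ : ProbVec E) (n : ℕ) :
    Measurable (likelihood K μ n) :=
  measurable_totalMass.comp (measurable_forward hK _ n)

theorem measurable_filterAt [Nonempty E] (hK : ∀ i j, Measurable fun y => K y i j)
    (μ : ProbVec E) (n : ℕ) : Measurable (filterAt K μ n) :=
  ProbVec.measurable_ofWeights.comp (measurable_forward hK _ n)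

theorem measurable_initObs (n : ℕ) : Measurable (initObs n : (ℕ → F) → Fin n → F) :=
  measurable_pi_lambda _ fun k => measurable_pi_apply (k : ℕ)

theorem lintegral_pi_fin_succ {φ : Measure F} [SigmaFinite φ] (n : ℕ)
    {g : (Fin (n + 1) → F) → ℝ≥0∞} (hg : Measurable g) :
    ∫⁻ v, g v ∂Measure.pi (fun _ => φ) =
      ∫⁻ v, ∫⁻ x, g (Fin.snoc v x) ∂φ ∂Measure.pi fun _ : Fin n => φ := by
  have h := (measurePreserving_piFinSuccAbove (fun _ : Fin (n + 1) => φ) (Fin.last n)).symm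
  rw [← h.lintegral_comp hg,
    lintegral_prod_symm _ (by exact (hg.comp h.measurable).aemeasurable)]
  refine lintegral_congr fun v => lintegral_congr fun x => ?_
  simp [MeasurableEquiv.piFinSuccAbove, Fin.insertNthEquiv]

end Measurability

/-- The weighted matrices `K(y)` are measurable in `y` and integrate against `φ` to a stochastic
matrix. -/
structure IsStochastic {E F : Type*} [MeasurableSpace F] (K : F → E → E → ℝ≥0∞)
    (φ : Measure F) : Prop where
  measurable : ∀ i j, Measurable fun y => K y i j
  lintegral_row : ∀ i, ∫⁻ y, totalMass (K y i) ∂φ = 1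

/-- `Q μ` is the law of the observation sequence of the hidden Markov model with observation
densities `K` and initial distribution `μ`. -/
structure IsHMM {E F : Type*} [MeasurableSpace F] (K : F → E → E → ℝ≥0∞) (φ : Measure F)
    (Q : ProbVec E → Measure (ℕ → F)) : Prop extends IsStochastic K φ where
  isProbabilityMeasure : ∀ μ, IsProbabilityMeasure (Q μ)
  map_initObs : ∀ μ n,
    (Q μ).map (initObs n) = (Measure.pi fun _ => φ).withDensity (likelihood K μ n)

namespace IsStochastic

variable {E F : Type*} [Countable E] [MeasurableSpace F] {K : F → E → E → ℝ≥0∞} {φ : Measure F}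
  (hK : IsStochastic K φ)
include hK

theorem lintegral_totalMass_vecMul (w : E → ℝ≥0∞) :
    ∫⁻ x, totalMass (vecMul w (K x)) ∂φ = totalMass w := by
  have hrow (i : E) : Measurable fun x => totalMass (K x i) :=
    measurable_totalMass.comp (measurable_pi_lambda _ (hK.measurable i))
  simp only [totalMass_vecMul]
  rw [lintegral_tsum fun i => ((hrow i).const_mul _).aemeasurable]
  simp only [lintegral_const_mul _ (hrow _), hK.lintegral_row, mul_one]
  rfl

theorem measurable_vecMul_weights (p : ProbVec E) :
    Measurable fun x => vecMul p.weights (K x) :=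
  measurable_vecMul hK.measurable measurable_const measurable_id

theorem ae_totalMass_vecMul_weights_ne_top (p : ProbVec E) :
    ∀ᵐ x ∂φ, totalMass (vecMul p.weights (K x)) ≠ ⊤ :=
  (ae_lt_top (measurable_totalMass.comp (hK.measurable_vecMul_weights p))
    ((hK.lintegral_totalMass_vecMul _).trans_ne
      (p.totalMass_weights.trans_ne ENNReal.one_ne_top))).mono fun _ => ne_of_lt

variable [SigmaFinite φ]

theorem lintegral_likelihood (μ : ProbVec E) (n : ℕ) :
    ∫⁻ v, likelihood K μ n v ∂Measure.pi (fun _ => φ) = 1 := by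
  induction n with
  | zero =>
    rw [Measure.pi_of_empty, lintegral_dirac]
    exact μ.totalMass_weights
  | succ n ih =>
    rw [lintegral_pi_fin_succ n (measurable_likelihood hK.measurable _ _)]
    simpa only [likelihood, forward_snoc, hK.lintegral_totalMass_vecMul] using ih

theorem ae_likelihood_ne_top (μ : ProbVec E) (n : ℕ) :
    ∀ᵐ v ∂Measure.pi (fun _ => φ), likelihood K μ n v ≠ ⊤ :=
  (ae_lt_top (measurable_likelihood hK.measurable μ n)
    ((hK.lintegral_likelihood μ n).trans_ne ENNReal.one_ne_top)).mono fun _ => ne_of_lt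

end IsStochastic

theorem measure_ext_of_map_initObs {F : Type*} [MeasurableSpace F] {P P' : Measure (ℕ → F)}
    [IsFiniteMeasure P'] (h : ∀ n, P.map (initObs n) = P'.map (initObs n)) : P = P' := by
  refine IsProjectiveLimit.unique (P := fun I => P'.map I.restrict) (fun I => ?_) fun I => rfl
  obtain ⟨n, hn⟩ : ∃ n, ∀ k ∈ I, k < n :=
    ⟨I.sup id + 1, fun k hk => Nat.lt_succ_of_le (I.le_sup (f := id) hk)⟩
  have hmeas : Measurable fun (v : Fin n → F) (k : I) => v ⟨k, hn k k.2⟩ := by fun_prop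
  have hrestrict : I.restrict = (fun (v : Fin n → F) (k : I) => v ⟨k, hn k k.2⟩) ∘ initObs n :=
    rfl
  rw [hrestrict, ← Measure.map_map hmeas (measurable_initObs n), h,
    Measure.map_map hmeas (measurable_initObs n)]
  rfl

namespace IsHMM

variable {E F : Type*} [Countable E] [MeasurableSpace F] {K : F → E → E → ℝ≥0∞} {φ : Measure F}
  {Q : ProbVec E → Measure (ℕ → F)} (hQ : IsHMM K φ Q)
include hQ

theorem lintegral_initObs (μ : ProbVec E) (n : ℕ) {g : (Fin n → F) → ℝ≥0∞} (hg : Measurable g) :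
    ∫⁻ y, g (initObs n y) ∂Q μ =
      ∫⁻ v, likelihood K μ n v * g v ∂Measure.pi fun _ => φ := by
  rw [← lintegral_map hg (measurable_initObs n), hQ.map_initObs,
    lintegral_withDensity_eq_lintegral_mul _ (measurable_likelihood hQ.measurable μ n) hg]
  rfl

omit [Countable E] in
theorem ae_of_ae_pi (μ : ProbVec E) {p : (n : ℕ) → (Fin n → F) → Prop}
    (hp : ∀ n, ∀ᵐ v ∂Measure.pi (fun _ => φ), p n v) :
    ∀ᵐ y ∂Q μ, ∀ n, p n (initObs n y) := by
  refine ae_all_iff.2 fun n => ae_of_ae_map (measurable_initObs n).aemeasurable ?_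
  rw [hQ.map_initObs]
  exact (withDensity_absolutelyContinuous _ _).ae_le (hp n)

theorem ae_likelihood_ne_top [SigmaFinite φ] (μ ν : ProbVec E) :
    ∀ᵐ y ∂Q μ, ∀ n, likelihood K ν n (initObs n y) ≠ ⊤ :=
  hQ.ae_of_ae_pi μ (hQ.toIsStochastic.ae_likelihood_ne_top ν)

theorem ae_likelihood_ne_zero (μ : ProbVec E) :
    ∀ᵐ y ∂Q μ, ∀ n, likelihood K μ n (initObs n y) ≠ 0 := by
  refine ae_all_iff.2 fun n => ae_of_ae_map (p := fun v => likelihood K μ n v ≠ 0)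
    (measurable_initObs n).aemeasurable ?_
  rw [hQ.map_initObs, ae_withDensity_iff (measurable_likelihood hQ.measurable μ n)]
  exact .of_forall fun _ => id

theorem lintegral_weights_filterAt_mul [Nonempty E] [SigmaFinite φ] (μ : ProbVec E) (n : ℕ)
    (j : E) {g : (Fin n → F) → ℝ≥0∞} (hg : Measurable g) :
    ∫⁻ y, (filterAt K μ n (initObs n y)).weights j * g (initObs n y) ∂Q μ =
      ∫⁻ v, forward K μ.weights n v j * g v ∂Measure.pi fun _ => φ := by
  rw [hQ.lintegral_initObs μ n (g := fun v => (filterAt K μ n v).weights j * g v)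
    (((ProbVec.measurable_weights_apply j).comp (measurable_filterAt hQ.measurable μ n)).mul hg)]
  refine lintegral_congr_ae ?_
  filter_upwards [hQ.toIsStochastic.ae_likelihood_ne_top μ n] with v hv
  rw [← mul_assoc]
  congr 1
  exact congrFun (ProbVec.totalMass_smul_weights_ofWeights hv) j

section Mixture

variable [DecidableEq E]

theorem eq_sum_pointMass (μ : ProbVec E) :
    Q μ = Measure.sum fun i => μ.weights i • Q (ProbVec.pointMass i) := by
  have hprob := hQ.isProbabilityMeasure
  refine (measure_ext_of_map_initObs fun n => Measure.ext fun A hA => ?_).symm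
  have hlik (i : E) := measurable_likelihood hQ.measurable (ProbVec.pointMass i) n
  rw [Measure.map_apply (measurable_initObs n) hA,
    Measure.sum_apply _ (measurable_initObs n hA), hQ.map_initObs, withDensity_apply _ hA]
  simp only [likelihood_eq_tsum μ]
  rw [lintegral_tsum fun i => ((hlik i).const_mul _).aemeasurable]
  refine tsum_congr fun i => ?_
  rw [lintegral_const_mul _ (hlik i), ← withDensity_apply _ hA, ← hQ.map_initObs,
    Measure.map_apply (measurable_initObs n) hA, Measure.smul_apply, smul_eq_mul]

theorem lintegral_eq_tsum (μ : ProbVec E) (g : (ℕ → F) → ℝ≥0∞) :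
    ∫⁻ y, g y ∂Q μ = ∑' i, μ.weights i * ∫⁻ y, g y ∂Q (ProbVec.pointMass i) := by
  conv_lhs => rw [hQ.eq_sum_pointMass μ]
  rw [lintegral_sum_measure]
  exact tsum_congr fun i => lintegral_smul_measure _ _

end Mixture

theorem absolutelyContinuous {μ ν : ProbVec E} (h : ∀ i, ν.1 i = 0 → μ.1 i = 0) :
    Q μ ≪ Q ν := by
  classical
  rw [hQ.eq_sum_pointMass μ, hQ.eq_sum_pointMass ν]
  refine Measure.absolutelyContinuous_sum_left fun i => ?_
  obtain hi | hi := (ν.apply_nonneg i).eq_or_lt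
  · rw [ProbVec.weights, h i hi.symm, ENNReal.ofReal_zero, zero_smul]
    exact Measure.AbsolutelyContinuous.zero _
  · refine Measure.absolutelyContinuous_sum_right i ?_
    exact (Measure.smul_absolutelyContinuous).trans
      (Measure.absolutelyContinuous_smul (ENNReal.ofReal_pos.2 hi).ne')

end IsHMM

open ProbabilityTheory

/-! ### The filter transition kernel -/

/-- The transition matrix `Pᵢⱼ = ∫ Kᵢⱼ(y) φ(dy)` of the signal. -/
noncomputable def meanMatrix {E F : Type*} [MeasurableSpace F] (K : F → E → E → ℝ≥0∞)
    (φ : Measure F) : E → E → ℝ≥0∞ :=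
  fun i j => ∫⁻ y, K y i j ∂φ

namespace IsStochastic

variable {E F : Type*} [Countable E] [Nonempty E] [MeasurableSpace F] {K : F → E → E → ℝ≥0∞}
  {φ : Measure F}

theorem lintegral_map_withDensity (hK : IsStochastic K φ) (p : ProbVec E)
    {g : ProbVec E → ℝ≥0∞} (hg : Measurable g) :
    ∫⁻ q, g q ∂(φ.withDensity fun x => totalMass (vecMul p.weights (K x))).map
        (fun x => ProbVec.ofWeights (vecMul p.weights (K x))) =
      ∫⁻ x, totalMass (vecMul p.weights (K x)) * g (ProbVec.ofWeights (vecMul p.weights (K x)))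
        ∂φ := by
  have hv := hK.measurable_vecMul_weights p
  have hs := ProbVec.measurable_ofWeights.comp hv
  exact (lintegral_map hg hs).trans <|
    lintegral_withDensity_eq_lintegral_mul _ (measurable_totalMass.comp hv) (hg.comp hs)

variable [SigmaFinite φ]

/-- The filter transition kernel `Π`: the law of the normalisation of `p K(x)` when `x` has
density `p K(x) 1` with respect to `φ`. -/
noncomputable def transition (hK : IsStochastic K φ) : Kernel (ProbVec E) (ProbVec E) where
  toFun p := (φ.withDensity fun x => totalMass (vecMul p.weights (K x))).map
    fun x => ProbVec.ofWeights (vecMul p.weights (K x))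
  measurable' := by
    refine Measure.measurable_of_measurable_coe _ fun s hs => ?_
    have hone : Measurable (s.indicator (1 : ProbVec E → ℝ≥0∞)) := measurable_one.indicator hs
    have hv : Measurable fun z : ProbVec E × F => vecMul z.1.weights (K z.2) :=
      measurable_vecMul hK.measurable (ProbVec.measurable_weights.comp measurable_fst)
        measurable_snd
    simp only [← lintegral_indicator_one hs, hK.lintegral_map_withDensity _ hone]
    exact ((measurable_totalMass.comp hv).mul
      (hone.comp (ProbVec.measurable_ofWeights.comp hv))).lintegral_prod_right'

variable (hK : IsStochastic K φ)

theorem lintegral_transition (p : ProbVec E) {g : ProbVec E → ℝ≥0∞} (hg : Measurable g) :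
    ∫⁻ q, g q ∂hK.transition p =
      ∫⁻ x, totalMass (vecMul p.weights (K x)) * g (ProbVec.ofWeights (vecMul p.weights (K x)))
        ∂φ :=
  hK.lintegral_map_withDensity p hg

instance : IsMarkovKernel hK.transition where
  isProbabilityMeasure p := ⟨by
    rw [← lintegral_one, hK.lintegral_transition p measurable_const]
    simp only [mul_one, hK.lintegral_totalMass_vecMul, p.totalMass_weights]⟩

theorem lintegral_weights_transition (p : ProbVec E) (j : E) :
    ∫⁻ q, q.weights j ∂hK.transition p = vecMul p.weights (meanMatrix K φ) j := by
  rw [hK.lintegral_transition p (ProbVec.measurable_weights_apply j)]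
  calc ∫⁻ x, totalMass (vecMul p.weights (K x)) *
        (ProbVec.ofWeights (vecMul p.weights (K x))).weights j ∂φ
      = ∫⁻ x, vecMul p.weights (K x) j ∂φ := by
        refine lintegral_congr_ae ?_
        filter_upwards [hK.ae_totalMass_vecMul_weights_ne_top p] with x hx
        exact congrFun (ProbVec.totalMass_smul_weights_ofWeights hx) j
    _ = vecMul p.weights (meanMatrix K φ) j := by
        unfold vecMul
        rw [lintegral_tsum fun i => ((hK.measurable i j).const_mul _).aemeasurable]
        exact tsum_congr fun i => lintegral_const_mul _ (hK.measurable i j)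

theorem totalMass_mul_lintegral_transition {w : E → ℝ≥0∞} (hw : totalMass w ≠ ⊤)
    {g : ProbVec E → ℝ≥0∞} (hg : Measurable g) :
    totalMass w * ∫⁻ q, g q ∂hK.transition (ProbVec.ofWeights w) =
      ∫⁻ x, totalMass (vecMul w (K x)) * g (ProbVec.ofWeights (vecMul w (K x))) ∂φ := by
  set p := ProbVec.ofWeights w
  have hwp (x : F) : vecMul w (K x) = totalMass w • vecMul p.weights (K x) := by
    rw [← vecMul_smul, ProbVec.totalMass_smul_weights_ofWeights hw]
  rw [hK.lintegral_transition p hg, ← lintegral_const_mul' _ _ hw]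
  refine lintegral_congr_ae ?_
  filter_upwards [hK.ae_totalMass_vecMul_weights_ne_top p] with x hx
  rw [hwp, totalMass_smul, mul_assoc]
  obtain h0 | h0 := eq_or_ne (totalMass w) 0
  · simp only [h0, zero_mul]
  obtain h0' | h0' := eq_or_ne (totalMass (vecMul p.weights (K x))) 0
  · simp only [h0', zero_mul]
  rw [ProbVec.ofWeights_smul h0 hw h0' hx]

theorem integral_transition (p : ProbVec E) {f : ProbVec E → ℝ} (hf : Measurable f) :
    ∫ q, f q ∂hK.transition p =
      ∫ x, (totalMass (vecMul p.weights (K x))).toReal *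
        f (ProbVec.ofWeights (vecMul p.weights (K x))) ∂φ := by
  have hv := hK.measurable_vecMul_weights p
  exact (integral_map (ProbVec.measurable_ofWeights.comp hv).aemeasurable
    hf.aestronglyMeasurable).trans <| integral_withDensity_eq_integral_toReal_smul
      (measurable_totalMass.comp hv)
      ((hK.ae_totalMass_vecMul_weights_ne_top p).mono fun _ => Ne.lt_top) _

theorem integrable_totalMass_mul {p : ProbVec E} {f : ProbVec E → ℝ}
    (hf : Integrable f (hK.transition p)) :
    Integrable (fun x => (totalMass (vecMul p.weights (K x))).toReal *
      f (ProbVec.ofWeights (vecMul p.weights (K x)))) φ := by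
  have hv := hK.measurable_vecMul_weights p
  exact (integrable_withDensity_iff_integrable_smul' (measurable_totalMass.comp hv)
    ((hK.ae_totalMass_vecMul_weights_ne_top p).mono fun _ => Ne.lt_top)).1
      (hf.comp_measurable (ProbVec.measurable_ofWeights.comp hv))

end IsStochastic

section Feller

theorem ofReal_abs_toReal_sub_le {a b : ℝ≥0∞} (ha : a ≠ ⊤) (hb : b ≠ ⊤) :
    ENNReal.ofReal |a.toReal - b.toReal| ≤ (a - b) + (b - a) := by
  rw [abs_eq_max_neg, neg_sub, ENNReal.ofReal_max, ENNReal.ofReal_sub _ ENNReal.toReal_nonneg,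
    ENNReal.ofReal_sub _ ENNReal.toReal_nonneg, ENNReal.ofReal_toReal ha,
    ENNReal.ofReal_toReal hb]
  exact max_le le_self_add le_add_self

variable {E : Type*} [Nonempty E]

theorem ProbVec.IsBddLipschitz.ofReal_abs_totalMass_mul_sub_le {f : ProbVec E → ℝ} {C : ℝ}
    (hf : IsBddLipschitz f C) {w u : E → ℝ≥0∞} (hw : totalMass w ≠ ⊤) (hu : totalMass u ≠ ⊤) :
    ENNReal.ofReal |(totalMass w).toReal * f (ofWeights w) -
        (totalMass u).toReal * f (ofWeights u)| ≤
      ENNReal.ofReal (3 * C) * (totalMass (w - u) + totalMass (u - w)) := by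
  set a := (totalMass w).toReal
  set b := (totalMass u).toReal
  have ha0 : 0 ≤ a := ENNReal.toReal_nonneg
  have hsplit : |a * f (ofWeights w) - b * f (ofWeights u)| ≤
      C * (a * tvDist (ofWeights w) (ofWeights u)) + C * |a - b| := by
    calc |a * f (ofWeights w) - b * f (ofWeights u)|
        = |a * (f (ofWeights w) - f (ofWeights u)) + (a - b) * f (ofWeights u)| := by ring_nf
      _ ≤ a * |f (ofWeights w) - f (ofWeights u)| + |a - b| * |f (ofWeights u)| := by
        simpa only [abs_mul, abs_of_nonneg ha0] using
          abs_add_le (a * (f (ofWeights w) - f (ofWeights u))) ((a - b) * f (ofWeights u))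
      _ ≤ a * (C * tvDist (ofWeights w) (ofWeights u)) + |a - b| * C := by
        gcongr
        exacts [hf.2 _ _, hf.1 _]
      _ = _ := by ring
  have htv : ENNReal.ofReal (a * tvDist (ofWeights w) (ofWeights u)) ≤
      2 * (totalMass (w - u) + totalMass (u - w)) := by
    rw [ENNReal.ofReal_mul ha0, ENNReal.ofReal_toReal hw]
    exact totalMass_mul_ofReal_tvDist_ofWeights_le hu hw
  have hmass : ENNReal.ofReal |a - b| ≤ totalMass (w - u) + totalMass (u - w) :=
    (ofReal_abs_toReal_sub_le hw hu).trans <|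
      add_le_add (totalMass_sub_le_totalMass_sub w u) (totalMass_sub_le_totalMass_sub u w)
  refine (ENNReal.ofReal_le_ofReal hsplit).trans <| ENNReal.ofReal_add_le.trans ?_
  rw [ENNReal.ofReal_mul hf.nonneg, ENNReal.ofReal_mul hf.nonneg, ENNReal.ofReal_mul zero_le_three,
    ENNReal.ofReal_ofNat]
  refine (add_le_add (mul_le_mul_right htv _) (mul_le_mul_right hmass _)).trans_eq ?_
  ring

variable [Countable E] {F : Type*} [MeasurableSpace F] {K : F → E → E → ℝ≥0∞}
  {φ : Measure F} [SigmaFinite φ] (hK : IsStochastic K φ)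

theorem ProbVec.IsBddLipschitz.transition {f : ProbVec E → ℝ} {C : ℝ} (hf : IsBddLipschitz f C) :
    IsBddLipschitz (fun p => ∫ q, f q ∂hK.transition p) (3 * C) := by
  have hC := hf.nonneg
  have hmeas := hf.continuous.measurable
  have hint (p : ProbVec E) := hK.integrable_totalMass_mul (hf.integrable (hK.transition p))
  refine ⟨fun p => ?_, fun p q => ?_⟩
  · have hle := norm_integral_le_of_norm_le_const (μ := hK.transition p)
      (ae_of_all _ fun q => (Real.norm_eq_abs _).trans_le (hf.1 q))
    rw [probReal_univ, mul_one] at hle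
    exact hle.trans (by linarith)
  simp only
  rw [hK.integral_transition p hmeas, hK.integral_transition q hmeas,
    ← integral_sub (hint p) (hint q)]
  have htv := tvDist_nonneg p q
  rw [← Real.norm_eq_abs]
  refine (norm_integral_le_lintegral_norm _).trans
    (ENNReal.toReal_le_of_le_ofReal (by positivity) ?_)
  calc ∫⁻ x, ENNReal.ofReal ‖_‖ ∂φ
      ≤ ∫⁻ x, ENNReal.ofReal (3 * C) * (totalMass (vecMul (p.weights - q.weights) (K x)) +
          totalMass (vecMul (q.weights - p.weights) (K x))) ∂φ := by
        refine lintegral_mono_ae ?_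
        filter_upwards [hK.ae_totalMass_vecMul_weights_ne_top p,
          hK.ae_totalMass_vecMul_weights_ne_top q] with x hp hq
        refine (hf.ofReal_abs_totalMass_mul_sub_le hp hq).trans ?_
        gcongr <;> exact totalMass_mono (vecMul_sub_vecMul_le _ _ _)
    _ = ENNReal.ofReal (3 * C * tvDist p q) := by
        rw [lintegral_const_mul' _ _ ENNReal.ofReal_ne_top, lintegral_add_left,
          hK.lintegral_totalMass_vecMul, hK.lintegral_totalMass_vecMul,
          ENNReal.ofReal_mul (p := 3 * C) (by positivity)]
        · rw [totalMass_sub_add_totalMass_sub]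
        · exact measurable_totalMass.comp
            (measurable_vecMul hK.measurable measurable_const measurable_id)

end Feller

section Cesaro

variable {Ω : Type*} [MeasurableSpace Ω]

theorem tendsto_integral_of_continuous_of_le [TopologicalSpace Ω] [OpensMeasurableSpace Ω]
    {ι : Type*} {l : Filter ι} {m : ι → ProbabilityMeasure Ω} {m₀ : ProbabilityMeasure Ω}
    (hm : Tendsto m l (𝓝 m₀)) {f : Ω → ℝ} (hf : Continuous f) {C : ℝ} (hC : ∀ x, |f x| ≤ C) :
    Tendsto (fun k => ∫ x, f x ∂(m k : Measure Ω)) l (𝓝 (∫ x, f x ∂(m₀ : Measure Ω))) :=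
  ProbabilityMeasure.tendsto_iff_forall_integral_tendsto.1 hm
    (BoundedContinuousFunction.ofNormedAddCommGroup f hf C hC)

theorem tendsto_integral_cesaroMean_sub_shift {m : ℕ → ProbabilityMeasure Ω} {f g : Ω → ℝ}
    {C : ℝ} (hf : ∀ k, Integrable f (m k : Measure Ω)) (hg : ∀ k, Integrable g (m k : Measure Ω))
    (hfC : ∀ x, |f x| ≤ C)
    (hgf : ∀ k, ∫ x, g x ∂(m k : Measure Ω) = ∫ x, f x ∂(m (k + 1) : Measure Ω)) :
    Tendsto (fun n => ∫ x, g x ∂(cesaroMean m n : Measure Ω) -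
      ∫ x, f x ∂(cesaroMean m n : Measure Ω)) atTop (𝓝 0) := by
  have hbound (k : ℕ) : |∫ x, f x ∂(m k : Measure Ω)| ≤ C := by
    simpa only [probReal_univ, mul_one, ← Real.norm_eq_abs] using
      norm_integral_le_of_norm_le_const (μ := (m k : Measure Ω)) (f := f) (ae_of_all _ hfC)
  have htele (n : ℕ) : ∫ x, g x ∂(cesaroMean m n : Measure Ω) -
      ∫ x, f x ∂(cesaroMean m n : Measure Ω) = ((n : ℝ) + 1)⁻¹ *
        (∫ x, f x ∂(m (n + 1) : Measure Ω) - ∫ x, f x ∂(m 0 : Measure Ω)) := by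
    rw [integral_cesaroMean hg, integral_cesaroMean hf, ← mul_sub, ← Finset.sum_sub_distrib]
    simp only [hgf]
    rw [Finset.sum_range_sub fun k => ∫ x, f x ∂(m k : Measure Ω)]
  have hzero := tendsto_one_div_add_atTop_nhds_zero_nat.mul_const (2 * C)
  rw [zero_mul] at hzero
  refine squeeze_zero_norm (fun n => ?_) hzero
  rw [htele, norm_mul, one_div, Real.norm_of_nonneg (by positivity), two_mul]
  gcongr
  exact (abs_sub _ _).trans (add_le_add (hbound _) (hbound _))

theorem integral_bind_kernel {Ω' : Type*} [MeasurableSpace Ω'] {m : Measure Ω} {κ : Kernel Ω Ω'}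
    {f : Ω' → ℝ} (hf : Integrable f (m.bind κ)) :
    ∫ y, f y ∂m.bind κ = ∫ x, ∫ y, f y ∂κ x ∂m := by
  rw [Measure.comp_eq_comp_const_apply] at hf ⊢
  rw [Kernel.integral_comp hf, Kernel.const_apply]

theorem integrable_integral_of_integrable_bind {Ω' : Type*} [MeasurableSpace Ω'] {m : Measure Ω}
    {κ : Kernel Ω Ω'} {f : Ω' → ℝ} (hf : Integrable f (m.bind κ)) :
    Integrable (fun x => ∫ y, f y ∂κ x) m := by
  rw [Measure.comp_eq_comp_const_apply] at hf
  simpa only [Kernel.const_apply] using hf.integral_comp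

end Cesaro

theorem ProbVec.invariant_of_mapClusterPt_cesaroMean {E : Type*} [Countable E]
    {κ : Kernel (ProbVec E) (ProbVec E)} [IsMarkovKernel κ]
    (hκ : ∀ f C, IsBddLipschitz f C → ∃ C', IsBddLipschitz (fun p => ∫ q, f q ∂κ p) C')
    {m : ℕ → ProbabilityMeasure (ProbVec E)}
    (hstep : ∀ n, (m (n + 1) : Measure (ProbVec E)) = (m n : Measure (ProbVec E)).bind κ)
    {𝕄 : ProbabilityMeasure (ProbVec E)} (h𝕄 : MapClusterPt 𝕄 atTop (cesaroMean m)) :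
    κ.Invariant (𝕄 : Measure (ProbVec E)) := by
  obtain ⟨U, hU, hlim⟩ := mapClusterPt_iff_ultrafilter.1 h𝕄
  have hbind (m : ProbabilityMeasure (ProbVec E)) :
      IsProbabilityMeasure ((m : Measure (ProbVec E)).bind κ) := inferInstance
  refine congrArg Subtype.val (probabilityMeasure_ext_of_isBddLipschitz
    (m := ⟨_, hbind 𝕄⟩) (m' := 𝕄) fun f C hf => ?_)
  obtain ⟨C', hf'⟩ := hκ f C hf
  have hint (m : ProbabilityMeasure (ProbVec E)) : ∫ q, f q ∂(m : Measure (ProbVec E)).bind κ =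
      ∫ p, ∫ q, f q ∂κ p ∂(m : Measure (ProbVec E)) :=
    integral_bind_kernel (hf.integrable _)
  rw [ProbabilityMeasure.coe_mk, hint]
  have hshift := tendsto_integral_cesaroMean_sub_shift (m := m) (fun k => hf.integrable _)
    (fun k => hf'.integrable _) hf.1 fun k => by rw [hstep, hint]
  exact sub_eq_zero.1 <| tendsto_nhds_unique
    ((tendsto_integral_of_continuous_of_le hlim hf'.continuous hf'.1).sub
      (tendsto_integral_of_continuous_of_le hlim hf.continuous hf.1)) (hshift.mono_left hU)

/-! ### Invariant measures and filter laws -/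

/-- The barycentre `∫ p m(dp)` of a measure on `P(E)`. -/
noncomputable def barycenter {E : Type*} (m : Measure (ProbVec E)) : E → ℝ≥0∞ :=
  fun j => ∫⁻ p, p.weights j ∂m

theorem IsStochastic.barycenter_bind {E F : Type*} [Countable E] [Nonempty E] [MeasurableSpace F]
    {K : F → E → E → ℝ≥0∞} {φ : Measure F} [SigmaFinite φ] (hK : IsStochastic K φ)
    (m : Measure (ProbVec E)) :
    barycenter (m.bind hK.transition) = vecMul (barycenter m) (meanMatrix K φ) := by
  funext j
  have hw (i : E) := ProbVec.measurable_weights_apply i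
  rw [barycenter, Measure.lintegral_bind (Kernel.aemeasurable _) (hw j).aemeasurable]
  simp only [hK.lintegral_weights_transition, vecMul, barycenter]
  rw [lintegral_tsum fun i => ((hw i).mul_const _).aemeasurable]
  exact tsum_congr fun i => lintegral_mul_const _ (hw i)

namespace IsHMM

variable {E F : Type*} [Countable E] [Nonempty E] [MeasurableSpace F] {K : F → E → E → ℝ≥0∞}
  {φ : Measure F} {Q : ProbVec E → Measure (ℕ → F)}

/-- The law of the filter `π_n^μ` under `Q μ`. -/
noncomputable def filterLaw (hQ : IsHMM K φ Q) (μ : ProbVec E) (n : ℕ) :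
    ProbabilityMeasure (ProbVec E) :=
  ⟨(Q μ).map fun y => filterAt K μ n (initObs n y),
    have := hQ.isProbabilityMeasure μ
    Measure.isProbabilityMeasure_map
      ((measurable_filterAt hQ.measurable μ n).comp (measurable_initObs n)).aemeasurable⟩

variable (hQ : IsHMM K φ Q)

theorem lintegral_filterLaw (μ : ProbVec E) (n : ℕ) {g : ProbVec E → ℝ≥0∞} (hg : Measurable g) :
    ∫⁻ p, g p ∂(hQ.filterLaw μ n : Measure (ProbVec E)) =
      ∫⁻ v, likelihood K μ n v * g (filterAt K μ n v) ∂Measure.pi fun _ => φ :=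
  (lintegral_map hg ((measurable_filterAt hQ.measurable μ n).comp (measurable_initObs n))).trans <|
    hQ.lintegral_initObs μ n (hg.comp (measurable_filterAt hQ.measurable μ n))

theorem integral_filterLaw (μ : ProbVec E) (n : ℕ) {f : ProbVec E → ℝ} (hf : Measurable f) :
    ∫ p, f p ∂(hQ.filterLaw μ n : Measure (ProbVec E)) =
      ∫ y, f (filterAt K μ n (initObs n y)) ∂Q μ :=
  integral_map ((measurable_filterAt hQ.measurable μ n).comp (measurable_initObs n)).aemeasurable
    hf.aestronglyMeasurable

variable [SigmaFinite φ]

theorem filterLaw_succ (μ : ProbVec E) (n : ℕ) :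
    (hQ.filterLaw μ (n + 1) : Measure (ProbVec E)) =
      (hQ.filterLaw μ n : Measure (ProbVec E)).bind hQ.toIsStochastic.transition := by
  refine Measure.ext_of_lintegral _ fun g hg => ?_
  have hstep : Measurable fun p => ∫⁻ q, g q ∂hQ.toIsStochastic.transition p :=
    hg.lintegral_kernel
  rw [Measure.lintegral_bind (Kernel.aemeasurable _) hg.aemeasurable,
    hQ.lintegral_filterLaw μ _ hg, hQ.lintegral_filterLaw μ n hstep,
    lintegral_pi_fin_succ n (g := fun v => likelihood K μ (n + 1) v * g (filterAt K μ (n + 1) v))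
      ((measurable_likelihood hQ.measurable μ _).mul <|
        hg.comp (measurable_filterAt hQ.measurable μ _))]
  refine lintegral_congr_ae ?_
  filter_upwards [hQ.toIsStochastic.ae_likelihood_ne_top μ n] with v hv
  simp only [likelihood, filterAt, forward_snoc]
  exact (hQ.toIsStochastic.totalMass_mul_lintegral_transition hv hg).symm

omit [SigmaFinite φ] in
theorem filterLaw_zero (μ : ProbVec E) :
    (hQ.filterLaw μ 0 : Measure (ProbVec E)) = Measure.dirac μ := by
  have := hQ.isProbabilityMeasure μ
  have hμ (v : Fin 0 → F) : filterAt K μ 0 v = μ :=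
    (ProbVec.eq_ofWeights (by simp [forward, μ.totalMass_weights])
      (by simp [forward, μ.totalMass_weights]) fun j => by
        simp [forward, μ.totalMass_weights, μ.toReal_weights]).symm
  simp only [filterLaw, ProbabilityMeasure.coe_mk, hμ, Measure.map_const, measure_univ, one_smul]

theorem barycenter_filterLaw_le {lam : ProbVec E}
    (hlam : vecMul lam.weights (meanMatrix K φ) = lam.weights) {μ : ProbVec E} {C : ℝ≥0∞}
    (hμ : μ.weights ≤ C • lam.weights) (n : ℕ) :
    barycenter (hQ.filterLaw μ n : Measure (ProbVec E)) ≤ C • lam.weights := by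
  induction n with
  | zero =>
    intro j
    rw [barycenter, hQ.filterLaw_zero, lintegral_dirac' _ (ProbVec.measurable_weights_apply j)]
    exact hμ j
  | succ n ih =>
    rw [hQ.filterLaw_succ, hQ.toIsStochastic.barycenter_bind, ← hlam, ← vecMul_smul]
    exact fun j => ENNReal.tsum_le_tsum fun i => mul_le_mul_left (ih i) _

theorem isCompact_closure_range_cesaroMean_filterLaw {lam : ProbVec E}
    (hlam : vecMul lam.weights (meanMatrix K φ) = lam.weights) {μ : ProbVec E} {C : ℝ≥0∞}
    (hC : C ≠ ⊤) (hμ : μ.weights ≤ C • lam.weights) :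
    IsCompact (closure (Set.range (cesaroMean (hQ.filterLaw μ)))) := by
  refine isCompact_closure_of_isTightMeasureSet <|
    (ProbVec.isTightMeasureSet_of_lintegral_weights_le (b := C • lam.weights) ?_).subset ?_
  · rwa [totalMass_smul, lam.totalMass_weights, mul_one]
  · rintro _ ⟨_, ⟨n, rfl⟩, rfl⟩ j
    exact lintegral_cesaroMean_le _ (fun k => hQ.barycenter_filterLaw_le hlam hμ k j) n

theorem exists_invariant {lam : ProbVec E}
    (hlam : vecMul lam.weights (meanMatrix K φ) = lam.weights) :
    ∃ 𝕄 : ProbabilityMeasure (ProbVec E),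
      hQ.toIsStochastic.transition.Invariant (𝕄 : Measure (ProbVec E)) := by
  obtain ⟨𝕄, -, h𝕄⟩ := (hQ.isCompact_closure_range_cesaroMean_filterLaw hlam one_ne_top
    (one_smul ℝ≥0∞ lam.weights).ge).exists_mapClusterPt
      (tendsto_principal.2 (.of_forall fun n => subset_closure (Set.mem_range_self n)) :
        Tendsto _ atTop _)
  exact ⟨𝕄, ProbVec.invariant_of_mapClusterPt_cesaroMean
    (fun _ _ hf => ⟨_, hf.transition hQ.toIsStochastic⟩) (hQ.filterLaw_succ lam) h𝕄⟩

theorem tendsto_cesaroMean_filterLaw {𝕄 : ProbabilityMeasure (ProbVec E)}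
    (huniq : ∀ 𝕄' : ProbabilityMeasure (ProbVec E),
      hQ.toIsStochastic.transition.Invariant (𝕄' : Measure (ProbVec E)) → 𝕄' = 𝕄)
    {lam : ProbVec E} (hlam : vecMul lam.weights (meanMatrix K φ) = lam.weights)
    {μ : ProbVec E} {C : ℝ≥0∞} (hC : C ≠ ⊤) (hμ : μ.weights ≤ C • lam.weights) :
    Tendsto (cesaroMean (hQ.filterLaw μ)) atTop (𝓝 𝕄) :=
  (hQ.isCompact_closure_range_cesaroMean_filterLaw hlam hC hμ).tendsto_nhds_of_unique_mapClusterPt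
    (.of_forall fun n => subset_closure (Set.mem_range_self n)) fun 𝕄' _ h => huniq 𝕄' <|
      ProbVec.invariant_of_mapClusterPt_cesaroMean
        (fun _ _ hf => ⟨_, hf.transition hQ.toIsStochastic⟩) (hQ.filterLaw_succ μ) h

end IsHMM

/-! ### Stability implies uniqueness -/

/-- Stability of the filter: `‖π_n^μ - π_n^ν‖ → 0` almost surely under `Q μ` whenever `μ ≪ ν`. -/
def FilterStable {E F : Type*} [Nonempty E] [MeasurableSpace F] (K : F → E → E → ℝ≥0∞)
    (Q : ProbVec E → Measure (ℕ → F)) : Prop :=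
  ∀ μ ν : ProbVec E, (∀ i, ν.1 i = 0 → μ.1 i = 0) →
    ∀ᵐ y ∂Q μ, Tendsto (fun n => tvDist (filterAt K μ n (initObs n y))
      (filterAt K ν n (initObs n y))) atTop (𝓝 0)

theorem totalMass_barycenter {E : Type*} [Countable E] (m : Measure (ProbVec E))
    [IsProbabilityMeasure m] : totalMass (barycenter m) = 1 := by
  unfold totalMass barycenter
  rw [← lintegral_tsum fun i => (ProbVec.measurable_weights_apply i).aemeasurable]
  have hone (p : ProbVec E) : ∑' i, p.weights i = 1 := p.totalMass_weights
  simp only [hone, lintegral_one, measure_univ]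

theorem IsStochastic.barycenter_eq_of_invariant {E F : Type*} [Countable E] [Nonempty E]
    [MeasurableSpace F] {K : F → E → E → ℝ≥0∞} {φ : Measure F} [SigmaFinite φ]
    (hK : IsStochastic K φ) {lam : ProbVec E}
    (hlam : ∀ ρ : ProbVec E, vecMul ρ.weights (meanMatrix K φ) = ρ.weights → ρ = lam)
    {m : Measure (ProbVec E)} [IsProbabilityMeasure m] (hm : hK.transition.Invariant m) :
    barycenter m = lam.weights := by
  have hw := ProbVec.weights_ofWeights_of_totalMass_eq_one (totalMass_barycenter m)
  rw [← hlam (ProbVec.ofWeights (barycenter m)) ?_, hw]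
  rw [hw, ← hK.barycenter_bind, hm.def]

namespace IsHMM

variable {E F : Type*} [Countable E] [MeasurableSpace F] {K : F → E → E → ℝ≥0∞}
  {φ : Measure F} {Q : ProbVec E → Measure (ℕ → F)}

/-- The laws `Q μ` as a Markov kernel from initial distributions to observation paths. -/
noncomputable def pathKernel (hQ : IsHMM K φ Q) : Kernel (ProbVec E) (ℕ → F) where
  toFun := Q
  measurable' := by
    classical
    refine Measure.measurable_of_measurable_coe _ fun s hs => ?_
    have hmix : (fun μ => Q μ s) =
        fun μ => ∑' i, μ.weights i * ∫⁻ y, s.indicator 1 y ∂Q (ProbVec.pointMass i) :=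
      funext fun μ => by rw [← lintegral_indicator_one hs, hQ.lintegral_eq_tsum]
    rw [hmix]
    exact Measurable.tsum fun i => (ProbVec.measurable_weights_apply i).mul_const _

variable (hQ : IsHMM K φ Q)

instance : IsMarkovKernel hQ.pathKernel := ⟨hQ.isProbabilityMeasure⟩

theorem bind_pathKernel {m : Measure (ProbVec E)} {μ : ProbVec E} (hm : barycenter m = μ.weights) :
    m.bind hQ.pathKernel = Q μ := by
  classical
  refine Measure.ext_of_lintegral _ fun g hg => ?_
  rw [Measure.lintegral_bind (Kernel.aemeasurable _) hg.aemeasurable, hQ.lintegral_eq_tsum μ, ← hm]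
  have hw (i : E) := ProbVec.measurable_weights_apply i
  calc ∫⁻ p, ∫⁻ y, g y ∂Q p ∂m
      = ∫⁻ p, ∑' i, p.weights i * ∫⁻ y, g y ∂Q (ProbVec.pointMass i) ∂m :=
        lintegral_congr fun p => hQ.lintegral_eq_tsum p g
    _ = ∑' i, ∫⁻ p, p.weights i * ∫⁻ y, g y ∂Q (ProbVec.pointMass i) ∂m :=
        lintegral_tsum fun i => ((hw i).mul_const _).aemeasurable
    _ = _ := tsum_congr fun i => lintegral_mul_const _ (hw i)

variable [Nonempty E]

include hQ

theorem integrable_filterAt (μ ν : ProbVec E) (n : ℕ) {f : ProbVec E → ℝ} {C : ℝ}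
    (hf : ProbVec.IsBddLipschitz f C) :
    Integrable (fun y => f (filterAt K ν n (initObs n y))) (Q μ) :=
  have := hQ.isProbabilityMeasure μ
  .of_bound (hf.continuous.measurable.comp ((measurable_filterAt hQ.measurable ν n).comp
    (measurable_initObs n))).aestronglyMeasurable C (.of_forall fun _ => hf.1 _)

theorem tendsto_integral_filterAt_sub {μ ν : ProbVec E} {f : ProbVec E → ℝ} {C : ℝ}
    (hf : ProbVec.IsBddLipschitz f C)
    (h : ∀ᵐ y ∂Q μ, Tendsto (fun n => tvDist (filterAt K μ n (initObs n y))
      (filterAt K ν n (initObs n y))) atTop (𝓝 0)) :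
    Tendsto (fun n => ∫ y, f (filterAt K μ n (initObs n y)) - f (filterAt K ν n (initObs n y)) ∂Q μ)
      atTop (𝓝 0) := by
  have := hQ.isProbabilityMeasure μ
  rw [← integral_zero (ℕ → F) ℝ (μ := Q μ)]
  refine tendsto_integral_of_dominated_convergence (fun _ => C + C)
    (fun n => ((hQ.integrable_filterAt μ μ n hf).sub
      (hQ.integrable_filterAt μ ν n hf)).aestronglyMeasurable)
    (integrable_const _) (fun n => .of_forall fun y => ?_) (h.mono fun y hy => ?_)
  · exact (abs_sub _ _).trans (add_le_add (hf.1 _) (hf.1 _))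
  · refine squeeze_zero_norm (fun n => hf.2 _ _) ?_
    simpa only [mul_zero] using hy.const_mul C

theorem integral_filterAt_sub (μ ν : ProbVec E) (n : ℕ) {f : ProbVec E → ℝ} {C : ℝ}
    (hf : ProbVec.IsBddLipschitz f C) :
    ∫ y, f (filterAt K μ n (initObs n y)) - f (filterAt K ν n (initObs n y)) ∂Q μ =
      ∫ p, f p ∂(hQ.filterLaw μ n : Measure (ProbVec E)) -
        ∫ y, f (filterAt K ν n (initObs n y)) ∂hQ.pathKernel μ := by
  rw [integral_sub (hQ.integrable_filterAt μ μ n hf) (hQ.integrable_filterAt μ ν n hf),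
    hQ.integral_filterLaw μ n hf.continuous.measurable]
  rfl

theorem integrable_integral_filterAt {m : Measure (ProbVec E)} {ν : ProbVec E}
    (hm : barycenter m = ν.weights) (n : ℕ) {f : ProbVec E → ℝ} {C : ℝ}
    (hf : ProbVec.IsBddLipschitz f C) :
    Integrable (fun μ => ∫ y, f (filterAt K ν n (initObs n y)) ∂hQ.pathKernel μ) m := by
  refine integrable_integral_of_integrable_bind ?_
  rw [hQ.bind_pathKernel hm]
  exact hQ.integrable_filterAt ν ν n hf

variable [SigmaFinite φ]

theorem integral_filterLaw_succ (μ : ProbVec E) (n : ℕ) {f : ProbVec E → ℝ} {C : ℝ}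
    (hf : ProbVec.IsBddLipschitz f C) :
    ∫ p, f p ∂(hQ.filterLaw μ (n + 1) : Measure (ProbVec E)) =
      ∫ p, ∫ q, f q ∂hQ.toIsStochastic.transition p ∂(hQ.filterLaw μ n : Measure (ProbVec E)) := by
  rw [hQ.filterLaw_succ]
  exact integral_bind_kernel (hf.integrable _)

theorem isBddLipschitz_integral_filterLaw (n : ℕ) {f : ProbVec E → ℝ} {C : ℝ}
    (hf : ProbVec.IsBddLipschitz f C) :
    ∃ C', ProbVec.IsBddLipschitz
      (fun μ => ∫ p, f p ∂(hQ.filterLaw μ n : Measure (ProbVec E))) C' := by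
  induction n generalizing f C with
  | zero =>
    refine ⟨C, ?_⟩
    simpa only [hQ.filterLaw_zero,
      integral_dirac' _ _ hf.continuous.measurable.stronglyMeasurable] using hf
  | succ n ih =>
    simp only [hQ.integral_filterLaw_succ _ n hf]
    exact ih (hf.transition hQ.toIsStochastic)

theorem integral_integral_filterLaw_of_invariant {m : Measure (ProbVec E)} [IsFiniteMeasure m]
    (hm : hQ.toIsStochastic.transition.Invariant m) (n : ℕ) {f : ProbVec E → ℝ} {C : ℝ}
    (hf : ProbVec.IsBddLipschitz f C) :
    ∫ μ, ∫ p, f p ∂(hQ.filterLaw μ n : Measure (ProbVec E)) ∂m = ∫ p, f p ∂m := by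
  induction n generalizing f C with
  | zero =>
    simp only [hQ.filterLaw_zero,
      integral_dirac' _ _ hf.continuous.measurable.stronglyMeasurable]
  | succ n ih =>
    simp only [hQ.integral_filterLaw_succ _ n hf]
    rw [ih (hf.transition hQ.toIsStochastic), ← integral_bind_kernel (hf.integrable _), hm.def]

theorem integrable_integral_filterLaw (m : Measure (ProbVec E)) [IsFiniteMeasure m] (n : ℕ)
    {f : ProbVec E → ℝ} {C : ℝ} (hf : ProbVec.IsBddLipschitz f C) :
    Integrable (fun μ => ∫ p, f p ∂(hQ.filterLaw μ n : Measure (ProbVec E))) m :=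
  let ⟨_, h⟩ := hQ.isBddLipschitz_integral_filterLaw n hf
  h.integrable m

theorem integral_integral_filterAt_sub_of_invariant {lam : ProbVec E}
    {m : Measure (ProbVec E)} [IsFiniteMeasure m]
    (hm : hQ.toIsStochastic.transition.Invariant m) (hbary : barycenter m = lam.weights) (n : ℕ)
    {f : ProbVec E → ℝ} {C : ℝ} (hf : ProbVec.IsBddLipschitz f C) :
    ∫ μ, ∫ y, f (filterAt K μ n (initObs n y)) - f (filterAt K lam n (initObs n y)) ∂Q μ ∂m =
      ∫ p, f p ∂m - ∫ p, f p ∂(hQ.filterLaw lam n : Measure (ProbVec E)) := by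
  have hbind := hQ.bind_pathKernel hbary
  have hint : Integrable (fun y => f (filterAt K lam n (initObs n y))) (m.bind hQ.pathKernel) := by
    rw [hbind]
    exact hQ.integrable_filterAt lam lam n hf
  simp only [fun μ => hQ.integral_filterAt_sub μ lam n hf]
  rw [integral_sub (hQ.integrable_integral_filterLaw m n hf)
      (hQ.integrable_integral_filterAt hbary n hf),
    hQ.integral_integral_filterLaw_of_invariant hm n hf, ← integral_bind_kernel hint, hbind,
    hQ.integral_filterLaw lam n hf.continuous.measurable]

theorem tendsto_integral_filterLaw_of_invariant {lam : ProbVec E} (hpos : ∀ i, lam.1 i ≠ 0)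
    {m : Measure (ProbVec E)} [IsFiniteMeasure m]
    (hm : hQ.toIsStochastic.transition.Invariant m) (hbary : barycenter m = lam.weights)
    (hstable : FilterStable K Q) {f : ProbVec E → ℝ} {C : ℝ} (hf : ProbVec.IsBddLipschitz f C) :
    Tendsto (fun n => ∫ p, f p ∂(hQ.filterLaw lam n : Measure (ProbVec E))) atTop
      (𝓝 (∫ p, f p ∂m)) := by
  have hdiff : Tendsto (fun n => ∫ p, f p ∂m -
      ∫ p, f p ∂(hQ.filterLaw lam n : Measure (ProbVec E))) atTop (𝓝 (∫ _, (0 : ℝ) ∂m)) := by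
    simp only [← hQ.integral_integral_filterAt_sub_of_invariant hm hbary _ hf]
    refine tendsto_integral_of_dominated_convergence (fun _ => C + C) (fun n => ?_)
      (integrable_const _) (fun n => .of_forall fun μ => ?_)
      (.of_forall fun μ => hQ.tendsto_integral_filterAt_sub hf
        (hstable μ lam fun i hi => absurd hi (hpos i)))
    · simp only [fun μ => hQ.integral_filterAt_sub μ lam n hf]
      exact ((hQ.integrable_integral_filterLaw m n hf).sub
        (hQ.integrable_integral_filterAt hbary n hf)).aestronglyMeasurable
    · have := hQ.isProbabilityMeasure μ
      simpa only [probReal_univ, mul_one] using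
        norm_integral_le_of_norm_le_const (μ := Q μ) (ae_of_all _ fun y =>
          (abs_sub (f (filterAt K μ n (initObs n y))) (f (filterAt K lam n (initObs n y)))).trans
            (add_le_add (hf.1 _) (hf.1 _)))
  rw [integral_zero] at hdiff
  simpa only [_root_.sub_sub_cancel, sub_zero] using hdiff.const_sub (∫ p, f p ∂m)

theorem eq_of_invariant_of_filterStable {lam : ProbVec E} (hpos : ∀ i, lam.1 i ≠ 0)
    (hlam : ∀ ρ : ProbVec E, vecMul ρ.weights (meanMatrix K φ) = ρ.weights → ρ = lam)
    (hstable : FilterStable K Q) {𝕄 𝕄' : ProbabilityMeasure (ProbVec E)}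
    (h : hQ.toIsStochastic.transition.Invariant (𝕄 : Measure (ProbVec E)))
    (h' : hQ.toIsStochastic.transition.Invariant (𝕄' : Measure (ProbVec E))) : 𝕄 = 𝕄' :=
  ProbVec.probabilityMeasure_ext_of_isBddLipschitz fun _ _ hf => tendsto_nhds_unique
    (hQ.tendsto_integral_filterLaw_of_invariant hpos h
      (hQ.toIsStochastic.barycenter_eq_of_invariant hlam h) hstable hf)
    (hQ.tendsto_integral_filterLaw_of_invariant hpos h'
      (hQ.toIsStochastic.barycenter_eq_of_invariant hlam h') hstable hf)

end IsHMM

/-! ### Excess supermartingales -/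

theorem ae_exists_tendsto_toReal_of_setLIntegral_succ_le {Ω : Type*} {mΩ : MeasurableSpace Ω}
    {P : Measure Ω} [IsFiniteMeasure P] {𝓕 : Filtration ℕ mΩ} {S : ℕ → Ω → ℝ≥0∞}
    (hS : ∀ n, Measurable[𝓕 n] (S n)) (h0 : ∫⁻ ω, S 0 ω ∂P ≠ ⊤)
    (hle : ∀ n s, MeasurableSet[𝓕 n] s → ∫⁻ ω in s, S (n + 1) ω ∂P ≤ ∫⁻ ω in s, S n ω ∂P) :
    ∀ᵐ ω ∂P, ∃ l : ℝ, Tendsto (fun n => (S n ω).toReal) atTop (𝓝 l) := by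
  have hmeas (n : ℕ) : Measurable (S n) := (hS n).mono (𝓕.le n) le_rfl
  have hanti : Antitone fun n => ∫⁻ ω, S n ω ∂P := antitone_nat_of_succ_le fun n => by
    simpa only [Measure.restrict_univ] using hle n Set.univ .univ
  have hfin (n : ℕ) : ∫⁻ ω, S n ω ∂P ≠ ⊤ := ne_top_of_le_ne_top h0 (hanti n.zero_le)
  have hae (n : ℕ) : ∀ᵐ ω ∂P, S n ω < ⊤ := ae_lt_top (hmeas n) (hfin n)
  have hset (n : ℕ) (s : Set Ω) :
      ∫ ω in s, (S n ω).toReal ∂P = (∫⁻ ω in s, S n ω ∂P).toReal :=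
    integral_toReal (hmeas n).aemeasurable (ae_restrict_of_ae (hae n))
  have hsup : Supermartingale (fun n ω => (S n ω).toReal) 𝓕 P := by
    refine supermartingale_of_setIntegral_succ_le
      (fun n => (hS n).ennreal_toReal.stronglyMeasurable)
      (fun n => integrable_toReal_of_lintegral_ne_top (hmeas n).aemeasurable (hfin n))
      fun n s hs => ?_
    rw [hset, hset]
    exact ENNReal.toReal_mono (ne_top_of_le_ne_top (hfin n) (setLIntegral_le_lintegral _ _))
      (hle n s hs)
  have hbdd (n : ℕ) : eLpNorm (-fun ω => (S n ω).toReal) 1 P ≤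
      ((∫⁻ ω, S 0 ω ∂P).toNNReal : ℝ≥0∞) := by
    rw [eLpNorm_neg, eLpNorm_one_eq_lintegral_enorm, ENNReal.coe_toNNReal h0]
    refine le_trans (lintegral_mono fun ω => ?_) (hanti n.zero_le)
    rw [Real.enorm_of_nonneg toReal_nonneg]
    exact ENNReal.ofReal_toReal_le
  filter_upwards [hsup.neg.exists_ae_tendsto_of_bdd hbdd] with ω ⟨l, hl⟩
  exact ⟨-l, by simpa only [Pi.neg_apply, neg_neg] using hl.neg⟩

/-- The filtration generated by the observations: `obsFiltration F n` is the σ-algebra of the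
first `n` of them. -/
def obsFiltration (F : Type*) [MeasurableSpace F] :
    Filtration ℕ (inferInstance : MeasurableSpace (ℕ → F)) where
  seq n := MeasurableSpace.comap (initObs n) inferInstance
  mono' m n hmn := by
    have h : (initObs m : (ℕ → F) → Fin m → F) = (fun v k => v (Fin.castLE hmn k)) ∘ initObs n :=
      rfl
    simp only
    rw [h, ← MeasurableSpace.comap_comp]
    refine MeasurableSpace.comap_mono (measurable_iff_comap_le.1 ?_)
    exact measurable_pi_lambda _ fun k => measurable_pi_apply _
  le' n := (measurable_initObs n).comap_le

/-- The mass of the excess `(μ K(y₁)⋯K(yₙ) - c ν K(y₁)⋯K(yₙ))⁺`, relative to that of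
`ν K(y₁)⋯K(yₙ)`. -/
noncomputable def excess {E F : Type*} (K : F → E → E → ℝ≥0∞) (μ ν : ProbVec E) (c : ℝ≥0∞)
    (n : ℕ) (v : Fin n → F) : ℝ≥0∞ :=
  totalMass (forward K μ.weights n v - c • forward K ν.weights n v) / likelihood K ν n v

section Excess

variable {E F : Type*} {K : F → E → E → ℝ≥0∞}

theorem excess_zero_left (μ ν : ProbVec E) (n : ℕ) (v : Fin n → F) :
    excess K μ ν 0 n v = likelihood K μ n v / likelihood K ν n v := by
  simp only [excess, zero_smul, tsub_zero, likelihood]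

theorem excess_le_likelihood_div (μ ν : ProbVec E) (c : ℝ≥0∞) (n : ℕ) (v : Fin n → F) :
    excess K μ ν c n v ≤ likelihood K μ n v / likelihood K ν n v :=
  ENNReal.div_le_div_right (totalMass_mono tsub_le_self) _

theorem excess_le_excess_add (μ ν : ProbVec E) (c d : ℝ≥0∞) (n : ℕ) (v : Fin n → F) :
    excess K μ ν c n v ≤ excess K μ ν d n v + (d - c) := by
  set w := forward K μ.weights n v
  set u := forward K ν.weights n v
  have hsub : totalMass (d • u - c • u) ≤ (d - c) * totalMass u := by
    rw [← totalMass_smul]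
    refine totalMass_mono fun j => tsub_le_iff_right.2 ?_
    simp only [Pi.smul_apply, smul_eq_mul, ← add_mul]
    gcongr
    exact le_tsub_add
  calc totalMass (w - c • u) / totalMass u
      ≤ (totalMass (w - d • u) + (d - c) * totalMass u) / totalMass u := by
        gcongr
        exact (totalMass_sub_triangle w (d • u) (c • u)).trans (by gcongr)
    _ ≤ totalMass (w - d • u) / totalMass u + (d - c) := by
        rw [ENNReal.add_div, mul_div_assoc]
        gcongr
        exact mul_le_of_le_one_right' ENNReal.div_self_le_one

theorem two_mul_excess_likelihood_div [Nonempty E] {μ ν : ProbVec E} {n : ℕ} {v : Fin n → F}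
    (hμ : likelihood K μ n v ≠ ⊤) (hν : likelihood K ν n v ≠ ⊤) (hν0 : likelihood K ν n v ≠ 0) :
    2 * excess K μ ν (likelihood K μ n v / likelihood K ν n v) n v =
      likelihood K μ n v / likelihood K ν n v *
        ENNReal.ofReal (tvDist (filterAt K μ n v) (filterAt K ν n v)) := by
  have hsmul : (likelihood K μ n v / likelihood K ν n v) • forward K ν.weights n v =
      likelihood K μ n v • (filterAt K ν n v).weights := by
    conv_lhs => enter [2]; rw [← ProbVec.totalMass_smul_weights_ofWeights hν]
    rw [smul_smul]
    exact congrArg (· • (filterAt K ν n v).weights) (ENNReal.div_mul_cancel hν0 hν)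
  rw [excess, hsmul, ← mul_div_assoc, ← ENNReal.mul_div_right_comm]
  exact congrArg (· / likelihood K ν n v) (ProbVec.totalMass_mul_ofReal_tvDist hμ _).symm

end Excess

theorem measurable_excess {E F : Type*} [Countable E] [MeasurableSpace F] {K : F → E → E → ℝ≥0∞}
    (hK : ∀ i j, Measurable fun y => K y i j) (μ ν : ProbVec E) (c : ℝ≥0∞) (n : ℕ) :
    Measurable (excess K μ ν c n) :=
  (measurable_totalMass.comp ((measurable_forward hK _ n).sub
    ((measurable_forward hK _ n).const_smul c))).div (measurable_likelihood hK ν n)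

theorem IsStochastic.lintegral_likelihood_mul_excess_snoc_le {E F : Type*} [Countable E]
    [MeasurableSpace F] {K : F → E → E → ℝ≥0∞} {φ : Measure F} (hK : IsStochastic K φ)
    (μ ν : ProbVec E) (c : ℝ≥0∞) {n : ℕ} {v : Fin n → F} (hv : likelihood K ν n v ≠ ⊤) :
    ∫⁻ x, likelihood K ν (n + 1) (Fin.snoc v x) * excess K μ ν c (n + 1) (Fin.snoc v x) ∂φ ≤
      likelihood K ν n v * excess K μ ν c n v := by
  obtain h0 | h0 := eq_or_ne (likelihood K ν n v) 0
  · have hzero (x : F) : likelihood K ν (n + 1) (Fin.snoc v x) = 0 := by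
      simp only [likelihood, forward_snoc, totalMass_vecMul, ENNReal.tsum_eq_zero.1 h0, zero_mul,
        tsum_zero]
    simp only [hzero, zero_mul, lintegral_zero, zero_le]
  · calc ∫⁻ x, likelihood K ν (n + 1) (Fin.snoc v x) *
          excess K μ ν c (n + 1) (Fin.snoc v x) ∂φ
        ≤ ∫⁻ x, totalMass (vecMul
            (forward K μ.weights n v - c • forward K ν.weights n v) (K x)) ∂φ := by
          refine lintegral_mono fun x => ENNReal.mul_div_le.trans (totalMass_mono ?_)
          rw [forward_snoc, forward_snoc, ← vecMul_smul]
          exact vecMul_sub_vecMul_le _ _ _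
      _ = totalMass (forward K μ.weights n v - c • forward K ν.weights n v) :=
          hK.lintegral_totalMass_vecMul _
      _ = likelihood K ν n v * excess K μ ν c n v := (ENNReal.mul_div_cancel h0 hv).symm

namespace IsHMM

variable {E F : Type*} [Countable E] [MeasurableSpace F] {K : F → E → E → ℝ≥0∞} {φ : Measure F}
  [SigmaFinite φ] {Q : ProbVec E → Measure (ℕ → F)} (hQ : IsHMM K φ Q)
include hQ

theorem setLIntegral_excess_succ_le (μ ν : ProbVec E) (c : ℝ≥0∞) (n : ℕ) {s : Set (ℕ → F)}
    (hs : MeasurableSet[obsFiltration F n] s) :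
    ∫⁻ y in s, excess K μ ν c (n + 1) (initObs (n + 1) y) ∂Q ν ≤
      ∫⁻ y in s, excess K μ ν c n (initObs n y) ∂Q ν := by
  obtain ⟨A, hA, rfl⟩ := hs
  have hone : Measurable (A.indicator (1 : (Fin n → F) → ℝ≥0∞)) := measurable_one.indicator hA
  have hinit : Measurable (Fin.init : (Fin (n + 1) → F) → Fin n → F) :=
    measurable_pi_lambda _ fun k => measurable_pi_apply _
  have hexc (k : ℕ) := measurable_excess hQ.measurable μ ν c k
  have hset (g : (ℕ → F) → ℝ≥0∞) : ∫⁻ y in initObs n ⁻¹' A, g y ∂Q ν =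
      ∫⁻ y, A.indicator 1 (initObs n y) * g y ∂Q ν := by
    rw [← lintegral_indicator (measurable_initObs n hA)]
    refine lintegral_congr fun y => ?_
    by_cases h : initObs n y ∈ A <;> simp [h]
  have hg : Measurable fun v : Fin (n + 1) → F =>
      A.indicator 1 (Fin.init v) * excess K μ ν c (n + 1) v := (hone.comp hinit).mul (hexc _)
  have hlaw := (hQ.lintegral_initObs ν (n + 1) hg).trans
    (lintegral_pi_fin_succ n ((measurable_likelihood hQ.measurable ν _).mul hg))
  rw [hset, hset, hQ.lintegral_initObs ν n (g := fun v => A.indicator 1 v * excess K μ ν c n v)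
    (hone.mul (hexc n))]
  refine hlaw.trans_le ?_
  refine lintegral_mono_ae ?_
  filter_upwards [hQ.toIsStochastic.ae_likelihood_ne_top ν n] with v hv
  simp only [Fin.init_snoc]
  by_cases h : v ∈ A
  · simpa [h] using hQ.toIsStochastic.lintegral_likelihood_mul_excess_snoc_le μ ν c hv
  · simp [h]

theorem ae_exists_tendsto_excess (μ ν : ProbVec E) (c : ℝ≥0∞) :
    ∀ᵐ y ∂Q ν, ∃ l : ℝ,
      Tendsto (fun n => (excess K μ ν c n (initObs n y)).toReal) atTop (𝓝 l) := by
  have := hQ.isProbabilityMeasure ν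
  refine ae_exists_tendsto_toReal_of_setLIntegral_succ_le (𝓕 := obsFiltration F)
    (fun n => (measurable_excess hQ.measurable μ ν c n).comp (comap_measurable (initObs n)))
    ?_ fun n s hs => hQ.setLIntegral_excess_succ_le μ ν c n hs
  refine ne_top_of_le_ne_top one_ne_top ?_
  calc ∫⁻ y, excess K μ ν c 0 (initObs 0 y) ∂Q ν ≤ ∫⁻ _, 1 ∂Q ν :=
        lintegral_mono fun y => (excess_le_likelihood_div _ _ _ _ _).trans_eq <| by
          simp only [likelihood, forward, ProbVec.totalMass_weights, div_one]
    _ = 1 := by rw [lintegral_one, measure_univ]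

end IsHMM

theorem lipschitzWith_toReal_excess {E F : Type*} {K : F → E → E → ℝ≥0∞} {μ ν : ProbVec E} {n : ℕ}
    {v : Fin n → F} (hμ : likelihood K μ n v ≠ ⊤) (hν0 : likelihood K ν n v ≠ 0) :
    LipschitzWith 1 fun c : NNReal => (excess K μ ν c n v).toReal := by
  have hfin (c : NNReal) : excess K μ ν c n v ≠ ⊤ :=
    ne_top_of_le_ne_top (ENNReal.div_ne_top hμ hν0) (excess_le_likelihood_div μ ν c n v)
  refine LipschitzWith.of_le_add fun c d => ?_
  calc (excess K μ ν c n v).toReal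
      ≤ (excess K μ ν d n v + (d - c : NNReal)).toReal := by
        refine ENNReal.toReal_mono (by finiteness [hfin d]) ?_
        exact_mod_cast excess_le_excess_add μ ν c d n v
    _ = (excess K μ ν d n v).toReal + (d - c : NNReal) := by
        rw [ENNReal.toReal_add (hfin d) ENNReal.coe_ne_top, ENNReal.coe_toReal]
    _ ≤ (excess K μ ν d n v).toReal + dist c d := by
        rw [dist_comm, NNReal.dist_eq, NNReal.coe_sub_def]
        gcongr
        exact max_le (le_abs_self _) (abs_nonneg _)

/-! ### Uniqueness implies stability -/

theorem ProbVec.ofReal_sq_sub_add {E : Type*} (p q : ProbVec E) (j : E) :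
    ENNReal.ofReal ((p.1 j - q.1 j) ^ 2) + 2 * (p.weights j * q.weights j) =
      p.weights j ^ 2 + q.weights j ^ 2 := by
  have hp := p.apply_nonneg j
  have hq := q.apply_nonneg j
  rw [weights, weights, ← ENNReal.ofReal_mul hp, ← ENNReal.ofReal_pow hp, ← ENNReal.ofReal_pow hq,
    ← ENNReal.ofReal_ofNat 2, ← ENNReal.ofReal_mul zero_le_two,
    ← ENNReal.ofReal_add (sq_nonneg _) (by positivity), ← ENNReal.ofReal_add (by positivity)
      (by positivity)]
  ring_nf

theorem ProbVec.lintegral_sq_sub_add {E : Type*} (m : Measure (ProbVec E × ProbVec E)) (j : E) :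
    ∫⁻ p, ENNReal.ofReal ((p.1.1 j - p.2.1 j) ^ 2) ∂m +
        2 * ∫⁻ p, p.1.weights j * p.2.weights j ∂m =
      ∫⁻ p, p.1.weights j ^ 2 ∂m + ∫⁻ p, p.2.weights j ^ 2 ∂m := by
  have hw₁ : Measurable fun p : ProbVec E × ProbVec E => p.1.weights j :=
    (measurable_weights_apply j).comp measurable_fst
  have hw₂ : Measurable fun p : ProbVec E × ProbVec E => p.2.weights j :=
    (measurable_weights_apply j).comp measurable_snd
  have hw₁₂ : Measurable fun p : ProbVec E × ProbVec E => p.1.weights j * p.2.weights j :=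
    hw₁.mul hw₂
  rw [← lintegral_const_mul _ hw₁₂,
    ← lintegral_add_left ((measurable_apply_sub_apply j).pow_const 2).ennreal_ofReal,
    ← lintegral_add_left (hw₁.pow_const 2)]
  exact lintegral_congr fun p => ofReal_sq_sub_add p.1 p.2 j

theorem ProbVec.lintegral_sq_weights_le_one {E : Type*} (m : Measure (ProbVec E))
    [IsProbabilityMeasure m] (j : E) : ∫⁻ p, p.weights j ^ 2 ∂m ≤ 1 :=
  (lintegral_mono fun p => pow_le_one' (p.weights_le_one j) 2).trans_eq
    (by rw [lintegral_one, measure_univ])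

theorem ProbVec.tendsto_lintegral_sq_weights {E ι : Type*} [Countable E] {l : Filter ι}
    {m : ι → ProbabilityMeasure (ProbVec E)} {m' : ProbabilityMeasure (ProbVec E)}
    (h : Tendsto m l (𝓝 m')) (j : E) :
    Tendsto (fun i => ∫⁻ p, p.weights j ^ 2 ∂(m i : Measure (ProbVec E))) l
      (𝓝 (∫⁻ p, p.weights j ^ 2 ∂(m' : Measure (ProbVec E)))) := by
  have hcont : Continuous fun p : ProbVec E => p.1 j ^ 2 :=
    ((continuous_apply j).comp continuous_subtype_val).pow 2
  have hbound (p : ProbVec E) : |p.1 j ^ 2| ≤ 1 := by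
    rw [abs_of_nonneg (sq_nonneg _)]
    exact pow_le_one₀ (p.apply_nonneg j) (p.apply_le_one j)
  have hint (m : ProbabilityMeasure (ProbVec E)) :
      ∫⁻ p, p.weights j ^ 2 ∂(m : Measure (ProbVec E)) =
        ENNReal.ofReal (∫ p, p.1 j ^ 2 ∂(m : Measure (ProbVec E))) := by
    rw [ofReal_integral_eq_lintegral_ofReal (.of_bound hcont.aestronglyMeasurable 1
      (ae_of_all _ hbound)) (ae_of_all _ fun _ => sq_nonneg _)]
    exact lintegral_congr fun p => (ENNReal.ofReal_pow (p.apply_nonneg j) 2).symm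
  simp only [hint]
  exact ENNReal.tendsto_ofReal (tendsto_integral_of_continuous_of_le h hcont hbound)

namespace IsHMM

variable {E F : Type*} [Countable E] [Nonempty E] [MeasurableSpace F] {K : F → E → E → ℝ≥0∞}
  {φ : Measure F} {Q : ProbVec E → Measure (ℕ → F)}

/-- The joint law of the filters `π_n^μ` and `π_n^ν` under `Q μ`. -/
noncomputable def pairLaw (hQ : IsHMM K φ Q) (μ ν : ProbVec E) (n : ℕ) :
    ProbabilityMeasure (ProbVec E × ProbVec E) :=
  ⟨(Q μ).map fun y => (filterAt K μ n (initObs n y), filterAt K ν n (initObs n y)),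
    have := hQ.isProbabilityMeasure μ
    Measure.isProbabilityMeasure_map <| Measurable.aemeasurable <|
      ((measurable_filterAt hQ.measurable μ n).comp (measurable_initObs n)).prodMk
        ((measurable_filterAt hQ.measurable ν n).comp (measurable_initObs n))⟩

variable (hQ : IsHMM K φ Q)

theorem lintegral_pairLaw (μ ν : ProbVec E) (n : ℕ) {g : ProbVec E × ProbVec E → ℝ≥0∞}
    (hg : Measurable g) :
    ∫⁻ p, g p ∂(hQ.pairLaw μ ν n : Measure (ProbVec E × ProbVec E)) =
      ∫⁻ y, g (filterAt K μ n (initObs n y), filterAt K ν n (initObs n y)) ∂Q μ :=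
  lintegral_map hg <| ((measurable_filterAt hQ.measurable μ n).comp (measurable_initObs n)).prodMk
    ((measurable_filterAt hQ.measurable ν n).comp (measurable_initObs n))

theorem lintegral_fst_pairLaw (μ ν : ProbVec E) (n : ℕ) {g : ProbVec E → ℝ≥0∞}
    (hg : Measurable g) :
    ∫⁻ p, g p.1 ∂(hQ.pairLaw μ ν n : Measure (ProbVec E × ProbVec E)) =
      ∫⁻ p, g p ∂(hQ.filterLaw μ n : Measure (ProbVec E)) :=
  (hQ.lintegral_pairLaw μ ν n (hg.comp measurable_fst)).trans <| Eq.symm <|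
    lintegral_map hg ((measurable_filterAt hQ.measurable μ n).comp (measurable_initObs n))

variable [SigmaFinite φ]

include hQ in
theorem tsum_mul_lintegral_weights_filterAt_mul [DecidableEq E] (μ : ProbVec E) (n : ℕ) (j : E)
    {g : (Fin n → F) → ℝ≥0∞} (hg : Measurable g) :
    ∑' k, μ.weights k * ∫⁻ y, (filterAt K (ProbVec.pointMass k) n (initObs n y)).weights j *
        g (initObs n y) ∂Q (ProbVec.pointMass k) =
      ∫⁻ y, (filterAt K μ n (initObs n y)).weights j * g (initObs n y) ∂Q μ := by
  have hmeas (k : E) : Measurable fun v : Fin n → F =>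
      forward K (ProbVec.pointMass k).weights n v j * g v :=
    ((measurable_pi_apply j).comp (measurable_forward hQ.measurable _ n)).mul hg
  simp only [hQ.lintegral_weights_filterAt_mul _ n j hg, forward_weights_eq_tsum μ,
    ← ENNReal.tsum_mul_right, mul_assoc]
  rw [lintegral_tsum fun k => ((hmeas k).const_mul _).aemeasurable]
  exact tsum_congr fun k => (lintegral_const_mul _ (hmeas k)).symm

theorem tsum_mul_lintegral_weights_mul_pairLaw [DecidableEq E] (μ : ProbVec E) (n : ℕ) (j : E) :
    ∑' k, μ.weights k * ∫⁻ p, p.1.weights j * p.2.weights j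
        ∂(hQ.pairLaw (ProbVec.pointMass k) μ n : Measure (ProbVec E × ProbVec E)) =
      ∫⁻ p, p.weights j ^ 2 ∂(hQ.filterLaw μ n : Measure (ProbVec E)) := by
  have hw : Measurable fun p : ProbVec E => p.weights j := ProbVec.measurable_weights_apply j
  simp only [hQ.lintegral_pairLaw _ μ n (g := fun p => p.1.weights j * p.2.weights j)
    ((hw.comp measurable_fst).mul (hw.comp measurable_snd))]
  rw [hQ.tsum_mul_lintegral_weights_filterAt_mul μ n j
      (g := fun v => (filterAt K μ n v).weights j)
      (hw.comp (measurable_filterAt hQ.measurable μ n)),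
    ← hQ.lintegral_fst_pairLaw μ μ n (hw.pow_const 2),
    hQ.lintegral_pairLaw μ μ n (g := fun p => p.1.weights j ^ 2)
      ((hw.comp measurable_fst).pow_const 2)]
  simp only [sq]

omit [SigmaFinite φ] in
theorem tsum_mul_lintegral_snd_pairLaw [DecidableEq E] (μ : ProbVec E) (n : ℕ)
    {g : ProbVec E → ℝ≥0∞} (hg : Measurable g) :
    ∑' k, μ.weights k * ∫⁻ p, g p.2
        ∂(hQ.pairLaw (ProbVec.pointMass k) μ n : Measure (ProbVec E × ProbVec E)) =
      ∫⁻ p, g p ∂(hQ.filterLaw μ n : Measure (ProbVec E)) := by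
  simp only [hQ.lintegral_pairLaw _ μ n (g := fun p => g p.2) (hg.comp measurable_snd)]
  rw [← hQ.lintegral_eq_tsum μ fun y => g (filterAt K μ n (initObs n y)),
    ← hQ.lintegral_fst_pairLaw μ μ n hg,
    hQ.lintegral_pairLaw μ μ n (g := fun p => g p.1) (hg.comp measurable_fst)]

-- `π_n^μ` is the mean of `π_n^k` given the observations when the initial state `k` is drawn from
-- `μ`, so the mean square deviation of `π_n^k` from `π_n^μ` is a difference of second moments.
theorem tsum_mul_lintegral_sq_sub_add [DecidableEq E] (μ : ProbVec E) (n : ℕ) (j : E) :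
    ∑' k, μ.weights k * ∫⁻ p, ENNReal.ofReal ((p.1.1 j - p.2.1 j) ^ 2)
        ∂(hQ.pairLaw (ProbVec.pointMass k) μ n : Measure (ProbVec E × ProbVec E)) +
      ∫⁻ p, p.weights j ^ 2 ∂(hQ.filterLaw μ n : Measure (ProbVec E)) =
    ∑' k, μ.weights k * ∫⁻ p, p.weights j ^ 2
        ∂(hQ.filterLaw (ProbVec.pointMass k) n : Measure (ProbVec E)) := by
  have hw : Measurable fun p : ProbVec E => p.weights j ^ 2 :=
    (ProbVec.measurable_weights_apply j).pow_const 2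
  have hfin : ∫⁻ p, p.weights j ^ 2 ∂(hQ.filterLaw μ n : Measure (ProbVec E)) ≠ ⊤ :=
    ne_top_of_le_ne_top one_ne_top (ProbVec.lintegral_sq_weights_le_one _ j)
  have hsum := tsum_congr (L := .unconditional E) fun k => congrArg (μ.weights k * ·) <|
    ProbVec.lintegral_sq_sub_add (hQ.pairLaw (ProbVec.pointMass k) μ n : Measure _) j
  simp only [mul_add, ENNReal.tsum_add, mul_left_comm _ (2 : ℝ≥0∞), ENNReal.tsum_mul_left,
    hQ.tsum_mul_lintegral_weights_mul_pairLaw, hQ.lintegral_fst_pairLaw _ _ _ hw,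
    hQ.tsum_mul_lintegral_snd_pairLaw μ n hw] at hsum
  rwa [two_mul, ← add_assoc, ENNReal.add_left_inj hfin] at hsum

theorem tsum_mul_lintegral_cesaroMean_sq_sub_add [DecidableEq E] (μ : ProbVec E) (n : ℕ) (j : E) :
    ∑' k, μ.weights k * ∫⁻ p, ENNReal.ofReal ((p.1.1 j - p.2.1 j) ^ 2)
        ∂(cesaroMean (hQ.pairLaw (ProbVec.pointMass k) μ) n : Measure (ProbVec E × ProbVec E)) +
      ∫⁻ p, p.weights j ^ 2 ∂(cesaroMean (hQ.filterLaw μ) n : Measure (ProbVec E)) =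
    ∑' k, μ.weights k * ∫⁻ p, p.weights j ^ 2
        ∂(cesaroMean (hQ.filterLaw (ProbVec.pointMass k)) n : Measure (ProbVec E)) := by
  simp only [tsum_mul_lintegral_cesaroMean]
  rw [lintegral_cesaroMean, ← mul_add, ← Finset.sum_add_distrib]
  simp only [hQ.tsum_mul_lintegral_sq_sub_add]

end IsHMM

theorem ProbVec.weights_ne_zero {E : Type*} {p : ProbVec E} {i : E} (h : p.1 i ≠ 0) :
    p.weights i ≠ 0 :=
  (ENNReal.ofReal_pos.2 ((p.apply_nonneg i).lt_of_ne' h)).ne'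

theorem ProbVec.weights_pointMass_le {E : Type*} [DecidableEq E] {p : ProbVec E} {i : E}
    (h : p.1 i ≠ 0) : (pointMass i).weights ≤ (p.weights i)⁻¹ • p.weights := by
  rw [weights_pointMass, Pi.single, update_le_iff]
  exact ⟨(ENNReal.inv_mul_cancel (weights_ne_zero h) (p.weights_ne_top i)).ge, fun _ _ => zero_le⟩

theorem ProbVec.measurable_ofReal_tvDist {E α : Type*} [Countable E] [MeasurableSpace α]
    {f g : α → ProbVec E} (hf : Measurable f) (hg : Measurable g) :
    Measurable fun x => ENNReal.ofReal (tvDist (f x) (g x)) := by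
  simp only [ofReal_tvDist, totalMass, Pi.sub_apply]
  exact (Measurable.tsum fun j => ((measurable_weights_apply j).comp hf).sub
    ((measurable_weights_apply j).comp hg)).const_mul 2

theorem ProbVec.lintegral_tvDist_le_two {E : Type*} (m : Measure (ProbVec E × ProbVec E))
    [IsProbabilityMeasure m] : ∫⁻ p, ENNReal.ofReal (tvDist p.1 p.2) ∂m ≤ 2 :=
  calc ∫⁻ p, ENNReal.ofReal (tvDist p.1 p.2) ∂m ≤ ∫⁻ _, 2 ∂m :=
        lintegral_mono fun p => ENNReal.ofReal_le_ofNat.2 (tvDist_le_two p.1 p.2)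
    _ = 2 := by rw [lintegral_const, measure_univ, mul_one]

namespace IsHMM

variable {E F : Type*} [Countable E] [Nonempty E] [MeasurableSpace F] {K : F → E → E → ℝ≥0∞}
  {φ : Measure F} {Q : ProbVec E → Measure (ℕ → F)} [SigmaFinite φ] (hQ : IsHMM K φ Q)

theorem lintegral_tvDist_pairLaw_le_tsum [DecidableEq E] (μ ν : ProbVec E) (n : ℕ) :
    ∫⁻ p, ENNReal.ofReal (tvDist p.1 p.2) ∂(hQ.pairLaw μ ν n : Measure (ProbVec E × ProbVec E)) ≤
      ∑' k, μ.weights k * ∫⁻ p, ENNReal.ofReal (tvDist p.1 p.2)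
        ∂(hQ.pairLaw (ProbVec.pointMass k) ν n : Measure (ProbVec E × ProbVec E)) := by
  have htv (ρ : ProbVec E) : Measurable fun v : Fin n → F =>
      ENNReal.ofReal (tvDist (filterAt K ρ n v) (filterAt K ν n v)) :=
    ProbVec.measurable_ofReal_tvDist (measurable_filterAt hQ.measurable ρ n)
      (measurable_filterAt hQ.measurable ν n)
  have hlik (ρ : ProbVec E) : Measurable fun v : Fin n → F => likelihood K ρ n v *
      ENNReal.ofReal (tvDist (filterAt K ρ n v) (filterAt K ν n v)) :=
    (measurable_likelihood hQ.measurable ρ n).mul (htv ρ)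
  have hint (ρ : ProbVec E) : ∫⁻ p, ENNReal.ofReal (tvDist p.1 p.2)
        ∂(hQ.pairLaw ρ ν n : Measure (ProbVec E × ProbVec E)) =
      ∫⁻ v, likelihood K ρ n v * ENNReal.ofReal (tvDist (filterAt K ρ n v) (filterAt K ν n v))
        ∂Measure.pi fun _ => φ := by
    rw [hQ.lintegral_pairLaw ρ ν n (ProbVec.measurable_ofReal_tvDist measurable_fst measurable_snd),
      ← hQ.lintegral_initObs ρ n
        (g := fun v => ENNReal.ofReal (tvDist (filterAt K ρ n v) (filterAt K ν n v))) (htv ρ)]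
  simp only [hint, ← lintegral_const_mul _ (hlik _)]
  rw [← lintegral_tsum fun k => ((hlik _).const_mul _).aemeasurable]
  refine lintegral_mono_ae ?_
  filter_upwards [hQ.toIsStochastic.ae_likelihood_ne_top μ n,
    ae_all_iff.2 fun k => hQ.toIsStochastic.ae_likelihood_ne_top (ProbVec.pointMass k) n]
    with v hμ hk
  simp only [likelihood, filterAt, forward_weights_eq_tsum μ] at hμ ⊢
  exact ProbVec.totalMass_mul_ofReal_tvDist_tsum_le hk hμ _

section UniqueInvariant

variable {𝕄 : ProbabilityMeasure (ProbVec E)}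
  (huniq : ∀ 𝕄' : ProbabilityMeasure (ProbVec E),
    hQ.toIsStochastic.transition.Invariant (𝕄' : Measure (ProbVec E)) → 𝕄' = 𝕄)
  {lam : ProbVec E} (hpos : ∀ i, lam.1 i ≠ 0)
  (hlam : vecMul lam.weights (meanMatrix K φ) = lam.weights)
include huniq hpos hlam

theorem tendsto_lintegral_cesaroMean_sq_sub [DecidableEq E] (i j : E) :
    Tendsto (fun n => ∫⁻ p, ENNReal.ofReal ((p.1.1 j - p.2.1 j) ^ 2)
      ∂(cesaroMean (hQ.pairLaw (ProbVec.pointMass i) lam) n : Measure (ProbVec E × ProbVec E)))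
      atTop (𝓝 0) := by
  have hsq (ν : ProbVec E) {C : ℝ≥0∞} (hC : C ≠ ⊤) (hν : ν.weights ≤ C • lam.weights) :=
    ProbVec.tendsto_lintegral_sq_weights (hQ.tendsto_cesaroMean_filterLaw huniq hlam hC hν) j
  have hmix : Tendsto (fun n => ∑' k, lam.weights k * ∫⁻ p, p.weights j ^ 2
      ∂(cesaroMean (hQ.filterLaw (ProbVec.pointMass k)) n : Measure (ProbVec E))) atTop
      (𝓝 (∫⁻ p, p.weights j ^ 2 ∂(𝕄 : Measure (ProbVec E)))) := by
    have h := tendsto_tsum_of_le (b := lam.weights) (lam.totalMass_weights.trans_ne one_ne_top)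
      (fun n k => mul_le_of_le_one_right' (ProbVec.lintegral_sq_weights_le_one _ j)) fun k =>
        ENNReal.Tendsto.const_mul (hsq (ProbVec.pointMass k)
          (ENNReal.inv_ne_top.2 (ProbVec.weights_ne_zero (hpos k)))
          (ProbVec.weights_pointMass_le (hpos k))) (.inr (lam.weights_ne_top k))
    rwa [ENNReal.tsum_mul_right, ← totalMass, lam.totalMass_weights, one_mul] at h
  have hdiff := ENNReal.Tendsto.const_mul (a := (lam.weights i)⁻¹) (ENNReal.Tendsto.sub hmix
    (hsq lam one_ne_top (one_smul ℝ≥0∞ lam.weights).ge) (.inl (ne_top_of_le_ne_top one_ne_top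
      (ProbVec.lintegral_sq_weights_le_one _ j))))
    (.inr (ENNReal.inv_ne_top.2 (ProbVec.weights_ne_zero (hpos i))))
  rw [tsub_self, mul_zero] at hdiff
  refine tendsto_of_tendsto_of_tendsto_of_le_of_le tendsto_const_nhds hdiff
    (fun _ => zero_le) fun n => ?_
  rw [← ENNReal.mul_le_iff_le_inv (ProbVec.weights_ne_zero (hpos i)) (lam.weights_ne_top i)]
  refine ENNReal.le_sub_of_add_le_right (ne_top_of_le_ne_top one_ne_top
    (ProbVec.lintegral_sq_weights_le_one _ j)) ?_
  rw [← hQ.tsum_mul_lintegral_cesaroMean_sq_sub_add lam n j]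
  gcongr
  exact ENNReal.le_tsum (f := fun k => lam.weights k * _) i

theorem tendsto_lintegral_cesaroMean_tvDist_pointMass [DecidableEq E] (i : E) :
    Tendsto (fun n => ∫⁻ p, ENNReal.ofReal (tvDist p.1 p.2)
      ∂(cesaroMean (hQ.pairLaw (ProbVec.pointMass i) lam) n : Measure (ProbVec E × ProbVec E)))
      atTop (𝓝 0) := by
  refine tendsto_lintegral_tvDist_zero (b := (lam.weights i)⁻¹ • lam.weights) ?_ (fun n j => ?_)
    (hQ.tendsto_lintegral_cesaroMean_sq_sub huniq hpos hlam i)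
  · rw [totalMass_smul, lam.totalMass_weights, mul_one]
    exact ENNReal.inv_ne_top.2 (ProbVec.weights_ne_zero (hpos i))
  · refine lintegral_cesaroMean_le _ (fun k => ?_) n
    rw [hQ.lintegral_fst_pairLaw _ _ _ (ProbVec.measurable_weights_apply j)]
    exact hQ.barycenter_filterLaw_le hlam (ProbVec.weights_pointMass_le (hpos i)) k j

theorem tendsto_lintegral_cesaroMean_tvDist (μ : ProbVec E) :
    Tendsto (fun n => ∫⁻ p, ENNReal.ofReal (tvDist p.1 p.2)
      ∂(cesaroMean (hQ.pairLaw μ lam) n : Measure (ProbVec E × ProbVec E))) atTop (𝓝 0) := by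
  classical
  have hmix := tendsto_tsum_of_le (b := fun k => μ.weights k * 2)
    (by rw [totalMass, ENNReal.tsum_mul_right, ← totalMass, μ.totalMass_weights]; finiteness)
    (fun n k => mul_le_mul_right (ProbVec.lintegral_tvDist_le_two _) (μ.weights k)) fun k =>
      ENNReal.Tendsto.const_mul (hQ.tendsto_lintegral_cesaroMean_tvDist_pointMass huniq hpos hlam k)
        (.inr (μ.weights_ne_top k))
  simp only [mul_zero, tsum_zero] at hmix
  refine tendsto_of_tendsto_of_tendsto_of_le_of_le tendsto_const_nhds hmix
    (fun _ => zero_le) fun n => ?_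
  rw [lintegral_cesaroMean, tsum_mul_lintegral_cesaroMean]
  gcongr
  exact hQ.lintegral_tvDist_pairLaw_le_tsum μ lam _

end UniqueInvariant

end IsHMM

namespace IsHMM

variable {E F : Type*} [Countable E] [MeasurableSpace F] {K : F → E → E → ℝ≥0∞}
  {φ : Measure F} {Q : ProbVec E → Measure (ℕ → F)} [SigmaFinite φ] (hQ : IsHMM K φ Q)
include hQ

theorem ae_exists_tendsto_likelihood_div (μ ν : ProbVec E) :
    ∀ᵐ y ∂Q ν, ∃ l : ℝ, Tendsto (fun n =>
      (likelihood K μ n (initObs n y) / likelihood K ν n (initObs n y)).toReal) atTop (𝓝 l) := by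
  simpa only [excess_zero_left] using hQ.ae_exists_tendsto_excess μ ν 0

variable [Nonempty E]

theorem ae_exists_tendsto_likelihood_div_mul_tvDist (μ ν : ProbVec E) :
    ∀ᵐ y ∂Q ν, ∃ l : ℝ, Tendsto (fun n =>
      (likelihood K μ n (initObs n y) / likelihood K ν n (initObs n y)).toReal *
        tvDist (filterAt K μ n (initObs n y)) (filterAt K ν n (initObs n y))) atTop (𝓝 l) := by
  filter_upwards [ae_all_iff.2 fun k => hQ.ae_exists_tendsto_excess μ ν
      (TopologicalSpace.denseSeq NNReal k), hQ.ae_exists_tendsto_likelihood_div μ ν,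
    hQ.ae_likelihood_ne_top ν μ, hQ.ae_likelihood_ne_top ν ν, hQ.ae_likelihood_ne_zero ν]
    with y hexc ⟨s, hs⟩ hμ hν hν0
  have hratio : Tendsto (fun n => (likelihood K μ n (initObs n y) /
      likelihood K ν n (initObs n y)).toNNReal) atTop (𝓝 s.toNNReal) :=
    (tendsto_real_toNNReal hs).congr fun n => ENNReal.toNNReal_toReal_eq _
  obtain ⟨l, hl⟩ := exists_tendsto_of_lipschitzWith_of_dense
    (fun n => lipschitzWith_toReal_excess (hμ n) (hν0 n))
    (TopologicalSpace.denseRange_denseSeq NNReal) (Set.forall_mem_range.2 hexc) hratio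
  refine ⟨2 * l, (hl.const_mul 2).congr fun n => ?_⟩
  have h := congrArg ENNReal.toReal (two_mul_excess_likelihood_div (hμ n) (hν n) (hν0 n))
  rwa [ENNReal.toReal_mul, ENNReal.toReal_mul, ENNReal.toReal_ofNat,
    ENNReal.toReal_ofReal (ProbVec.tvDist_nonneg _ _),
    ← ENNReal.coe_toNNReal (ENNReal.div_ne_top (hμ n) (hν0 n))] at h

omit [SigmaFinite φ] in
theorem lintegral_likelihood_div_mul_tvDist_le (μ ν : ProbVec E) (n : ℕ) :
    ∫⁻ y, likelihood K μ n (initObs n y) / likelihood K ν n (initObs n y) * ENNReal.ofReal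
        (tvDist (filterAt K μ n (initObs n y)) (filterAt K ν n (initObs n y))) ∂Q ν ≤
      ∫⁻ p, ENNReal.ofReal (tvDist p.1 p.2)
        ∂(hQ.pairLaw μ ν n : Measure (ProbVec E × ProbVec E)) := by
  have htv := ProbVec.measurable_ofReal_tvDist (measurable_filterAt hQ.measurable μ n)
    (measurable_filterAt hQ.measurable ν n)
  rw [hQ.lintegral_pairLaw μ ν n (ProbVec.measurable_ofReal_tvDist measurable_fst measurable_snd),
    hQ.lintegral_initObs μ n
      (g := fun v => ENNReal.ofReal (tvDist (filterAt K μ n v) (filterAt K ν n v))) htv,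
    hQ.lintegral_initObs ν n (g := fun v => likelihood K μ n v / likelihood K ν n v *
      ENNReal.ofReal (tvDist (filterAt K μ n v) (filterAt K ν n v)))
      (((measurable_likelihood hQ.measurable μ n).div
        (measurable_likelihood hQ.measurable ν n)).mul htv)]
  refine lintegral_mono fun v => ?_
  rw [← mul_assoc]
  gcongr
  exact ENNReal.mul_div_le

theorem ae_tendsto_likelihood_div_mul_tvDist {μ ν : ProbVec E}
    (h : liminf (fun n => ∫⁻ p, ENNReal.ofReal (tvDist p.1 p.2)
      ∂(hQ.pairLaw μ ν n : Measure (ProbVec E × ProbVec E))) atTop = 0) :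
    ∀ᵐ y ∂Q ν, Tendsto (fun n =>
      (likelihood K μ n (initObs n y) / likelihood K ν n (initObs n y)).toReal *
        tvDist (filterAt K μ n (initObs n y)) (filterAt K ν n (initObs n y))) atTop (𝓝 0) := by
  have hmeas (n : ℕ) : Measurable fun y : ℕ → F =>
      likelihood K μ n (initObs n y) / likelihood K ν n (initObs n y) * ENNReal.ofReal
        (tvDist (filterAt K μ n (initObs n y)) (filterAt K ν n (initObs n y))) :=
    (((measurable_likelihood hQ.measurable μ n).div (measurable_likelihood hQ.measurable ν n)).mul
      (ProbVec.measurable_ofReal_tvDist (measurable_filterAt hQ.measurable μ n)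
        (measurable_filterAt hQ.measurable ν n))).comp (measurable_initObs n)
  have hfatou := (lintegral_liminf_le (μ := Q ν) hmeas).trans
    ((liminf_le_liminf (.of_forall (hQ.lintegral_likelihood_div_mul_tvDist_le μ ν))).trans_eq h)
  have hliminf := (lintegral_eq_zero_iff (.liminf hmeas)).1 (le_antisymm hfatou zero_le)
  filter_upwards [hliminf, hQ.ae_exists_tendsto_likelihood_div_mul_tvDist μ ν,
    hQ.ae_likelihood_ne_top ν μ, hQ.ae_likelihood_ne_zero ν] with y hy ⟨l, hl⟩ hμ hν0
  have hlim := (ENNReal.tendsto_ofReal hl).congr fun n => show _ =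
      likelihood K μ n (initObs n y) / likelihood K ν n (initObs n y) * ENNReal.ofReal
        (tvDist (filterAt K μ n (initObs n y)) (filterAt K ν n (initObs n y))) by
    rw [ENNReal.ofReal_mul toReal_nonneg,
      ENNReal.ofReal_toReal (ENNReal.div_ne_top (hμ n) (hν0 n))]
  have hl0 : l ≤ 0 := ENNReal.ofReal_eq_zero.1 (hlim.liminf_eq.symm.trans hy)
  rwa [hl0.antisymm (ge_of_tendsto' hl fun n =>
    mul_nonneg toReal_nonneg (ProbVec.tvDist_nonneg _ _))] at hl

theorem ae_tendsto_tvDist_of_liminf_eq_zero {μ ν : ProbVec E} (hμν : ∀ i, ν.1 i = 0 → μ.1 i = 0)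
    (h : liminf (fun n => ∫⁻ p, ENNReal.ofReal (tvDist p.1 p.2)
      ∂(hQ.pairLaw μ ν n : Measure (ProbVec E × ProbVec E))) atTop = 0) :
    ∀ᵐ y ∂Q μ, Tendsto (fun n =>
      tvDist (filterAt K μ n (initObs n y)) (filterAt K ν n (initObs n y))) atTop (𝓝 0) := by
  have hac := (hQ.absolutelyContinuous hμν).ae_le
  filter_upwards [hac (hQ.ae_tendsto_likelihood_div_mul_tvDist h),
    hQ.ae_exists_tendsto_likelihood_div ν μ, hQ.ae_likelihood_ne_top μ μ,
    hQ.ae_likelihood_ne_top μ ν, hQ.ae_likelihood_ne_zero μ, hac (hQ.ae_likelihood_ne_zero ν)]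
    with y hy ⟨l, hl⟩ hμ hν hμ0 hν0
  have hprod := hl.mul hy
  rw [mul_zero] at hprod
  refine hprod.congr fun n => ?_
  have hμn := ENNReal.toReal_ne_zero.2 ⟨hμ0 n, hμ n⟩
  have hνn := ENNReal.toReal_ne_zero.2 ⟨hν0 n, hν n⟩
  rw [ENNReal.toReal_div, ENNReal.toReal_div]
  field_simp

theorem filterStable_of_unique_invariant {𝕄 : ProbabilityMeasure (ProbVec E)}
    (huniq : ∀ 𝕄' : ProbabilityMeasure (ProbVec E),
      hQ.toIsStochastic.transition.Invariant (𝕄' : Measure (ProbVec E)) → 𝕄' = 𝕄)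
    {lam : ProbVec E} (hpos : ∀ i, lam.1 i ≠ 0)
    (hlam : vecMul lam.weights (meanMatrix K φ) = lam.weights) : FilterStable K Q := by
  have hstable (μ : ProbVec E) := hQ.ae_tendsto_tvDist_of_liminf_eq_zero
    (fun i hi => absurd hi (hpos i)) (liminf_lintegral_eq_zero_of_cesaroMean _
      (hQ.tendsto_lintegral_cesaroMean_tvDist huniq hpos hlam μ))
  intro μ ν hμν
  filter_upwards [hstable μ, (hQ.absolutelyContinuous hμν).ae_le (hstable ν)] with y hμ hν
  refine squeeze_zero (fun _ => ProbVec.tvDist_nonneg _ _) (fun n =>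
    (ProbVec.tvDist_triangle _ (filterAt K lam n (initObs n y)) _).trans_eq
      (congrArg _ (ProbVec.tvDist_comm _ _))) ?_
  simpa only [add_zero] using hμ.add hν

end IsHMM

/-! ### Irreducible transition matrices -/

section Irreducible

variable {E : Type*} [DecidableEq E]

theorem matPow_apply_eq_zero {P : E → E → ℝ} {s : Set E} (hP : ∀ i ∈ s, ∀ j ∉ s, P i j = 0)
    {i : E} (hi : i ∈ s) (n : ℕ) {j : E} (hj : j ∉ s) : matPow P n i j = 0 := by
  induction n generalizing j with
  | zero => exact if_neg (ne_of_mem_of_not_mem hi hj)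
  | succ n ih =>
    refine (tsum_congr fun k => ?_).trans tsum_zero
    by_cases hk : k ∈ s
    · rw [hP k hk j hj, mul_zero]
    · rw [ih hk, zero_mul]

theorem ProbVec.apply_ne_zero_of_irreducible {P : E → E → ℝ≥0∞}
    (hP : ∀ i j, ∃ n, 0 < matPow (fun i j => (P i j).toReal) n i j) {p : ProbVec E}
    (hp : vecMul p.weights P = p.weights) (j : E) : p.1 j ≠ 0 := by
  intro hj
  have hsupp (i : E) : p.weights i ≠ 0 ↔ p.1 i ≠ 0 := by
    rw [← ProbVec.toReal_weights, ENNReal.toReal_ne_zero, and_iff_left (p.weights_ne_top i)]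
  have hclosed : ∀ i ∈ {i | p.1 i ≠ 0}, ∀ k ∉ {i | p.1 i ≠ 0}, (P i k).toReal = 0 := by
    intro i hi k hk
    have hk0 : vecMul p.weights P k = 0 :=
      (congrFun hp k).trans (not_ne_iff.1 (mt (hsupp k).1 hk))
    have hik := (mul_eq_zero.1 (ENNReal.tsum_eq_zero.1 hk0 i)).resolve_left ((hsupp i).2 hi)
    rw [hik, ENNReal.toReal_zero]
  obtain ⟨i, hi⟩ := p.exists_apply_ne_zero
  obtain ⟨n, hn⟩ := hP i j
  exact hn.ne' (matPow_apply_eq_zero hclosed hi n (not_not.2 hj))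

end Irreducible

/-! ### Real matrices -/

theorem ae_pi_fin_init {F : Type*} [MeasurableSpace F] {φ : Measure F} [SigmaFinite φ] {n : ℕ}
    {p : (Fin n → F) → Prop} (hp : ∀ᵐ v ∂Measure.pi (fun _ => φ), p v) :
    ∀ᵐ v ∂Measure.pi (fun _ : Fin (n + 1) => φ), p (Fin.init v) := by
  have h := (Measure.quasiMeasurePreserving_snd.comp
    (measurePreserving_piFinSuccAbove (fun _ : Fin (n + 1) => φ)
      (Fin.last n)).quasiMeasurePreserving).ae hp
  filter_upwards [h] with v hv
  convert hv using 1
  funext k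
  simp [MeasurableEquiv.piFinSuccAbove, Fin.insertNthEquiv, Fin.init]

theorem IsStochastic.meanMatrix_le_one {E F : Type*} [MeasurableSpace F] {K : F → E → E → ℝ≥0∞}
    {φ : Measure F} (hK : IsStochastic K φ) (i j : E) : meanMatrix K φ i j ≤ 1 :=
  (lintegral_mono fun y => apply_le_totalMass (K y i) j).trans_eq (hK.lintegral_row i)

/-- The matrices `M(y)` with entries viewed in `[0, ∞]`, where row sums and matrix products always
converge. -/
noncomputable def ofRealMatrix {E F : Type*} (M : F → E → E → ℝ) : F → E → E → ℝ≥0∞ :=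
  fun y i j => ENNReal.ofReal (M y i j)

section Normalisation

variable {E F : Type*} {M : F → E → E → ℝ} {r : E → ℝ} {w : E → ℝ≥0∞}

theorem rowTot_toReal (hw : totalMass w ≠ ⊤) :
    rowTot (fun j => (w j).toReal) = (totalMass w).toReal :=
  (hasSum_toReal_totalMass hw).tsum_eq

variable [Nonempty E] (h0 : totalMass w ≠ 0) (htop : totalMass w ≠ ⊤)
include h0 htop

theorem ProbVec.mul_rowTot_eq_iff (hr : r = fun j => (w j).toReal) {p : ProbVec E} :
    (∀ j, p.1 j * rowTot r = r j) ↔ p = ProbVec.ofWeights w := by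
  subst hr
  rw [rowTot_toReal htop]
  refine ⟨ProbVec.eq_ofWeights h0 htop, ?_⟩
  rintro rfl j
  rw [mul_comm, ProbVec.totalMass_mul_ofWeights htop]

theorem filterStep_eq_ofWeights {μ : ProbVec E} {y : F}
    (hr : rowMul M μ.1 y = fun j => (w j).toReal) : filterStep M μ y = ProbVec.ofWeights w := by
  have hiff {p : ProbVec E} := ProbVec.mul_rowTot_eq_iff (p := p) h0 htop hr
  have hex : ∃ p : ProbVec E, ∀ j, p.1 j * rowTot (rowMul M μ.1 y) = rowMul M μ.1 y j :=
    ⟨_, hiff.2 rfl⟩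
  exact (dif_pos hex).trans (hiff.1 hex.choose_spec)

theorem filterList_eq_ofWeights {μ : ProbVec E} {ys : List F}
    (hr : rowIter M μ.1 ys = fun j => (w j).toReal) : filterList M μ ys = ProbVec.ofWeights w := by
  have hiff {p : ProbVec E} := ProbVec.mul_rowTot_eq_iff (p := p) h0 htop hr
  have hex : ∃ p : ProbVec E, ∀ j, p.1 j * rowTot (rowIter M μ.1 ys) = rowIter M μ.1 ys j :=
    ⟨_, hiff.2 rfl⟩
  exact (dif_pos hex).trans (hiff.1 hex.choose_spec)

end Normalisation

section OfRealMatrix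

variable {E F : Type*} {M : F → E → E → ℝ} (hMnn : ∀ y i j, 0 ≤ M y i j)
include hMnn

theorem rowMul_toReal {w : E → ℝ≥0∞} (hw : totalMass w ≠ ⊤) (y : F) :
    rowMul M (fun j => (w j).toReal) y = fun j => (vecMul w (ofRealMatrix M y) j).toReal := by
  funext j
  rw [vecMul, ENNReal.tsum_toReal_eq fun i =>
    ENNReal.mul_ne_top (apply_ne_top_of_totalMass_ne_top hw i) (by exact ENNReal.ofReal_ne_top)]
  simp only [rowMul, ofRealMatrix, ENNReal.toReal_mul, ENNReal.toReal_ofReal (hMnn _ _ _)]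

theorem rowMul_eq_toReal_vecMul (μ : ProbVec E) (y : F) :
    rowMul M μ.1 y = fun j => (vecMul μ.weights (ofRealMatrix M y) j).toReal := by
  rw [← rowMul_toReal hMnn (μ.totalMass_weights.trans_ne one_ne_top)]
  simp only [μ.toReal_weights]

theorem rowIter_eq_toReal_forward_succ {μ : ProbVec E} {n : ℕ} {v : Fin (n + 1) → F}
    (htop : likelihood (ofRealMatrix M) μ n (Fin.init v) ≠ ⊤)
    (hv : rowIter M μ.1 (List.ofFn (Fin.init v)) =
      fun j => (forward (ofRealMatrix M) μ.weights n (Fin.init v) j).toReal) :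
    rowIter M μ.1 (List.ofFn v) =
      fun j => (forward (ofRealMatrix M) μ.weights (n + 1) v j).toReal := by
  rw [forward, ← rowMul_toReal hMnn htop, ← hv, rowIter, List.ofFn_succ_last, List.foldl_append]
  rfl

variable [MeasurableSpace F] {φ : Measure F}

theorem transMat_eq_toReal_meanMatrix (hM : ∀ i j, Measurable fun y => M y i j) :
    transMat M φ = fun i j => (meanMatrix (ofRealMatrix M) φ i j).toReal := by
  funext i j
  exact integral_eq_lintegral_of_nonneg_ae (.of_forall fun y => hMnn y i j)
    (hM i j).aestronglyMeasurable

theorem tsum_mul_transMat_eq_iff (hM : ∀ i j, Measurable fun y => M y i j)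
    (hK : IsStochastic (ofRealMatrix M) φ) (ρ : ProbVec E) :
    (∀ j, ∑' i, ρ.1 i * transMat M φ i j = ρ.1 j) ↔
      vecMul ρ.weights (meanMatrix (ofRealMatrix M) φ) = ρ.weights := by
  set P := meanMatrix (ofRealMatrix M) φ
  have hP (i j : E) : P i j ≠ ⊤ := ne_top_of_le_ne_top one_ne_top (hK.meanMatrix_le_one i j)
  have hfin (j : E) : vecMul ρ.weights P j ≠ ⊤ :=
    ne_top_of_le_ne_top (ρ.totalMass_weights.trans_ne one_ne_top) <|
      ENNReal.tsum_le_tsum fun i => mul_le_of_le_one_right' (hK.meanMatrix_le_one i j)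
  rw [funext_iff]
  refine forall_congr' fun j => ?_
  rw [← ENNReal.toReal_eq_toReal_iff' (hfin j) (ρ.weights_ne_top j), ρ.toReal_weights, vecMul,
    ENNReal.tsum_toReal_eq fun i => ENNReal.mul_ne_top (ρ.weights_ne_top i) (hP i j)]
  simp only [ENNReal.toReal_mul, ρ.toReal_weights, transMat_eq_toReal_meanMatrix hMnn hM, P]

theorem ae_rowIter_eq_toReal_forward [Countable E] [SigmaFinite φ]
    (hK : IsStochastic (ofRealMatrix M) φ) (μ : ProbVec E) (n : ℕ) :
    ∀ᵐ v ∂Measure.pi (fun _ : Fin n => φ), rowIter M μ.1 (List.ofFn v) =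
      fun j => (forward (ofRealMatrix M) μ.weights n v j).toReal := by
  induction n with
  | zero =>
    exact .of_forall fun v => by
      simp only [List.ofFn_zero, rowIter, List.foldl_nil, forward, μ.toReal_weights]
  | succ n ih =>
    filter_upwards [ae_pi_fin_init ih, ae_pi_fin_init (hK.ae_likelihood_ne_top μ n)] with v hv htop
    exact rowIter_eq_toReal_forward_succ hMnn htop hv

theorem ae_filterSeq_eq_filterAt [Countable E] [Nonempty E] [SigmaFinite φ]
    {Q : ProbVec E → Measure (ℕ → F)} (hQ : IsHMM (ofRealMatrix M) φ Q) (μ : ProbVec E) :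
    ∀ᵐ y ∂Q μ, ∀ n, filterSeq M μ y n = filterAt (ofRealMatrix M) μ n (initObs n y) := by
  filter_upwards [hQ.ae_of_ae_pi μ (ae_rowIter_eq_toReal_forward hMnn hQ.toIsStochastic μ),
    hQ.ae_likelihood_ne_top μ μ, hQ.ae_likelihood_ne_zero μ] with y hy htop h0 n
  exact filterList_eq_ofWeights (h0 n) (htop n) (hy n)

theorem filterStable_ofRealMatrix_iff [Countable E] [Nonempty E] [SigmaFinite φ]
    {Q : ProbVec E → Measure (ℕ → F)} (hQ : IsHMM (ofRealMatrix M) φ Q) :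
    FilterStable (ofRealMatrix M) Q ↔ ∀ μ ν : ProbVec E, (∀ i, ν.1 i = 0 → μ.1 i = 0) →
      ∀ᵐ y ∂Q μ, Tendsto (fun n => tvDist (filterSeq M μ y n) (filterSeq M ν y n)) atTop (𝓝 0) := by
  classical
  refine forall₃_congr fun μ ν hμν => eventually_congr ?_
  filter_upwards [ae_filterSeq_eq_filterAt hMnn hQ μ,
    (hQ.absolutelyContinuous hμν).ae_le (ae_filterSeq_eq_filterAt hMnn hQ ν)] with y hμ hν
  simp only [hμ, hν]

variable [Countable E] [Nonempty E] [SigmaFinite φ]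

theorem filterKernel_eq_integral_transition (hK : IsStochastic (ofRealMatrix M) φ)
    {f : ProbVec E → ℝ} (hf : Measurable f) (μ : ProbVec E) :
    filterKernel M φ f μ = ∫ p, f p ∂hK.transition μ := by
  rw [hK.integral_transition μ hf]
  refine integral_congr_ae ?_
  filter_upwards [hK.ae_totalMass_vecMul_weights_ne_top μ] with y htop
  have hr := rowMul_eq_toReal_vecMul hMnn μ y
  rw [hr, rowTot_toReal htop, mul_comm]
  obtain h0 | h0 := eq_or_ne (totalMass (vecMul μ.weights (ofRealMatrix M y))) 0
  · simp only [h0, ENNReal.toReal_zero, zero_mul]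
  · rw [filterStep_eq_ofWeights h0 htop hr]

theorem isPiInvariant_iff_invariant (hK : IsStochastic (ofRealMatrix M) φ)
    {𝕄 : ProbabilityMeasure (ProbVec E)} :
    IsPiInvariant M φ 𝕄 ↔ hK.transition.Invariant (𝕄 : Measure (ProbVec E)) := by
  have hint {f : ProbVec E → ℝ} (hf : IsBddCont f) (m : Measure (ProbVec E)) [IsFiniteMeasure m] :
      Integrable f m :=
    .of_bound hf.1.measurable.aestronglyMeasurable _ (.of_forall hf.2.choose_spec)
  have hbind {f : ProbVec E → ℝ} (hf : IsBddCont f) :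
      ∫ μ, filterKernel M φ f μ ∂(𝕄 : Measure (ProbVec E)) =
        ∫ p, f p ∂(𝕄 : Measure (ProbVec E)).bind hK.transition := by
    rw [integral_bind_kernel (hint hf _)]
    simp only [filterKernel_eq_integral_transition hMnn hK hf.1.measurable]
  refine ⟨fun h => ?_, fun h f hf => (hbind hf).trans (by rw [h.def])⟩
  have heq : (⟨(𝕄 : Measure (ProbVec E)).bind hK.transition, inferInstance⟩ :
      ProbabilityMeasure (ProbVec E)) = 𝕄 :=
    ProbVec.probabilityMeasure_ext_of_isBddLipschitz fun f C hf =>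
      have hf' : IsBddCont f := ⟨hf.continuous, C, hf.1⟩
      (hbind hf').symm.trans (h f hf')
  exact congrArg Subtype.val heq

end OfRealMatrix

section HiddenMarkov

variable {E F : Type*} [MeasurableSpace F] {φ : Measure F} {M : F → E → E → ℝ}
  {Q : ProbVec E → Measure (ℕ → F)}

theorem isStochastic_ofRealMatrix (hMmeas : ∀ i j, Measurable fun y => M y i j)
    (hMnn : ∀ y i j, 0 ≤ M y i j) (hMsum : ∀ᵐ y ∂φ, ∀ i, Summable (M y i))
    (hQprob : ∀ μ, IsProbabilityMeasure (Q μ))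
    (hQ : ∀ μ : ProbVec E, ∀ A : Set (Fin 1 → F), MeasurableSet A →
      Q μ {y | initObs 1 y ∈ A} = ∫⁻ v in A, ENNReal.ofReal (rowTot (rowIter M μ.1 (List.ofFn v)))
        ∂Measure.pi fun _ => φ) :
    IsStochastic (ofRealMatrix M) φ where
  measurable i j := (hMmeas i j).ennreal_ofReal
  lintegral_row i := by
    classical
    set δ := ProbVec.pointMass i
    have := hQprob δ
    calc ∫⁻ y, totalMass (ofRealMatrix M y i) ∂φ
        = ∫⁻ y, ENNReal.ofReal (rowTot (rowMul M δ.1 y)) ∂φ := by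
          refine lintegral_congr_ae ?_
          filter_upwards [hMsum] with y hy
          have htop : totalMass (ofRealMatrix M y i) ≠ ⊤ := (hy i).tsum_ofReal_ne_top
          rw [rowMul_eq_toReal_vecMul hMnn, vecMul_weights_pointMass, rowTot_toReal htop,
            ENNReal.ofReal_toReal htop]
      _ = ∫⁻ v : Fin 1 → F, ENNReal.ofReal (rowTot (rowIter M δ.1 (List.ofFn v)))
            ∂Measure.pi fun _ => φ :=
          ((measurePreserving_funUnique φ (Fin 1)).lintegral_comp_emb
            (MeasurableEquiv.measurableEmbedding _) _).symm
      _ = Q δ Set.univ := by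
          rw [← setLIntegral_univ, ← hQ δ _ .univ]
          rfl
      _ = 1 := measure_univ

theorem isHMM_ofRealMatrix [Countable E] [SigmaFinite φ]
    (hK : IsStochastic (ofRealMatrix M) φ) (hMnn : ∀ y i j, 0 ≤ M y i j)
    (hQprob : ∀ μ, IsProbabilityMeasure (Q μ))
    (hQ : ∀ (μ : ProbVec E) (n : ℕ) (A : Set (Fin n → F)), MeasurableSet A →
      Q μ {y | initObs n y ∈ A} = ∫⁻ v in A, ENNReal.ofReal (rowTot (rowIter M μ.1 (List.ofFn v)))
        ∂Measure.pi fun _ => φ) :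
    IsHMM (ofRealMatrix M) φ Q where
  toIsStochastic := hK
  isProbabilityMeasure := hQprob
  map_initObs μ n := by
    refine Measure.ext fun A hA => ?_
    rw [Measure.map_apply (measurable_initObs n) hA, withDensity_apply _ hA]
    refine (hQ μ n A hA).trans (lintegral_congr_ae (ae_restrict_of_ae ?_))
    filter_upwards [ae_rowIter_eq_toReal_forward hMnn hK μ n, hK.ae_likelihood_ne_top μ n]
      with v hv htop
    rw [hv, rowTot_toReal htop]
    exact ENNReal.ofReal_toReal htop

end HiddenMarkov

theorem unique_invariant_measure_iff_filter_stability_general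
    {E : Type*} [Countable E] [DecidableEq E] {F : Type*} [MeasurableSpace F]
    (φ : Measure F) [SigmaFinite φ] (M : F → E → E → ℝ)
    (hMmeas : ∀ i j, Measurable fun y => M y i j) (hMnn : ∀ y i j, 0 ≤ M y i j)
    (hMsum : ∀ᵐ y ∂φ, ∀ i, Summable (M y i))
    (hPirr : ∀ i j : E, ∃ n : ℕ, 0 < matPow (transMat M φ) n i j) (lam : ProbVec E)
    (hlamInv : ∀ j, ∑' i, lam.1 i * transMat M φ i j = lam.1 j)
    (hlamUniq : ∀ ρ : ProbVec E, (∀ j, ∑' i, ρ.1 i * transMat M φ i j = ρ.1 j) → ρ = lam)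
    (Q : ProbVec E → Measure (ℕ → F)) (hQprob : ∀ μ, IsProbabilityMeasure (Q μ))
    (hQ : ∀ (μ : ProbVec E) (n : ℕ) (A : Set (Fin n → F)), MeasurableSet A →
      Q μ {y | (fun k : Fin n => y k) ∈ A} =
        ∫⁻ v in A, ENNReal.ofReal (rowTot (rowIter M μ.1 (List.ofFn v))) ∂Measure.pi fun _ => φ) :
    (∃! 𝕄 : ProbabilityMeasure (ProbVec E), IsPiInvariant M φ 𝕄) ↔
      ∀ μ ν : ProbVec E, (∀ i, ν.1 i = 0 → μ.1 i = 0) →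
        ∀ᵐ y ∂Q μ, Tendsto (fun n => tvDist (filterSeq M μ y n) (filterSeq M ν y n))
          atTop (𝓝 0) := by
  have : Nonempty E := lam.exists_apply_ne_zero.nonempty
  have hK : IsStochastic (ofRealMatrix M) φ :=
    isStochastic_ofRealMatrix hMmeas hMnn hMsum hQprob fun μ A hA => hQ μ 1 A hA
  have hHMM : IsHMM (ofRealMatrix M) φ Q := isHMM_ofRealMatrix hK hMnn hQprob hQ
  have hlam := (tsum_mul_transMat_eq_iff hMnn hMmeas hK lam).1 hlamInv
  have huniq (ρ : ProbVec E) (hρ : vecMul ρ.weights _ = ρ.weights) :=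
    hlamUniq ρ ((tsum_mul_transMat_eq_iff hMnn hMmeas hK ρ).2 hρ)
  rw [transMat_eq_toReal_meanMatrix hMnn hMmeas] at hPirr
  have hpos := ProbVec.apply_ne_zero_of_irreducible hPirr hlam
  simp only [isPiInvariant_iff_invariant hMnn hK, ← filterStable_ofRealMatrix_iff hMnn hHMM]
  constructor
  · rintro ⟨𝕄, -, h𝕄⟩
    exact hHMM.filterStable_of_unique_invariant h𝕄 hpos hlam
  · intro hstable
    obtain ⟨𝕄, h𝕄⟩ := hHMM.exists_invariant hlam
    exact ⟨𝕄, h𝕄, fun 𝕄' h => hHMM.eq_of_invariant_of_filterStable hpos huniq hstable h h𝕄⟩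

/-- The filter transition kernel `Π` has a unique invariant probability measure if and
only if the filter is stable: for all `μ ≪ ν` in `P(E)`, the total variation distance
`‖π_n^μ − π_n^ν‖` tends to `0` for `Q_μ`-a.e. observation path. -/
theorem unique_invariant_measure_iff_filter_stability
    {E : Type*} [Countable E] [Nonempty E] [DecidableEq E]
    {F : Type*} [TopologicalSpace F] [PolishSpace F] [MeasurableSpace F] [BorelSpace F]
    (φ : Measure F) [SigmaFinite φ]
    (M : F → E → E → ℝ)
    (hMmeas : ∀ i j, Measurable fun y => M y i j)
    (hMnn : ∀ y i j, 0 ≤ M y i j)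
    (hMbd : ∀ᵐ y ∂φ, ∃ C : ℝ, ∀ (i : E) (s : Finset E), ∑ j ∈ s, M y i j ≤ C)
    (hPtrans : ∀ i, HasSum (fun j => transMat M φ i j) 1)
    (hPirr : ∀ i j : E, ∃ n : ℕ, 0 < matPow (transMat M φ) n i j)
    (lam : ProbVec E)
    (hlamInv : ∀ j, ∑' i, (lam : E → ℝ) i * transMat M φ i j = (lam : E → ℝ) j)
    (hlamUniq : ∀ ρ : ProbVec E,
      (∀ j, ∑' i, (ρ : E → ℝ) i * transMat M φ i j = (ρ : E → ℝ) j) → ρ = lam)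
    (Q : ProbVec E → Measure (ℕ → F))
    (hQprob : ∀ μ, IsProbabilityMeasure (Q μ))
    (hQ : ∀ (μ : ProbVec E) (n : ℕ) (A : Set (Fin n → F)), MeasurableSet A →
      Q μ {y : ℕ → F | (fun k : Fin n => y k) ∈ A} =
        ∫⁻ v in A, ENNReal.ofReal (rowTot (rowIter M (μ : E → ℝ) (List.ofFn v)))
          ∂(Measure.pi fun _ => φ))
    :
    (∃! 𝕄 : ProbabilityMeasure (ProbVec E), IsPiInvariant M φ 𝕄) ↔
      ∀ μ ν : ProbVec E, (∀ i : E, (ν : E → ℝ) i = 0 → (μ : E → ℝ) i = 0) →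
        ∀ᵐ y ∂(Q μ),
          Tendsto (fun n : ℕ => tvDist (filterSeq M μ y n) (filterSeq M ν y n))
            atTop (nhds 0) :=
  unique_invariant_measure_iff_filter_stability_general φ M hMmeas hMnn
    (hMbd.mono fun y ⟨_, hC⟩ i => summable_of_sum_le (hMnn y i) (hC i))
    hPirr lam hlamInv hlamUniq Q hQprob hQ
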